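/- Let W_{n+1} be a spherical Whittaker function on GL_{n+1}(F) with respect to character ψ (W_{n+1}(ug) = ψ(u)W_{n+1}(g) for u upper unipotent, W_{n+1} right GL_{n+1}(𝒪)-invariant). Define W̃(h) = Σ_{η ∈ 𝒩_{n+1}} (1-ℓ)^{s(η)} W_{n+1}(ι(h)η) for h ∈ GL_n(F), where 𝒩_{n+1} = φ⁻¹N_{n+1}(𝒪)φ/N_{n+1}(𝒪) with φ = diag(ϖ⁻¹,…,ϖ^{-(n+1)}), and s(η) counts the indices i with η_{i,i+1} ∈ 𝒪. Then W̃ is supported on N_n(F)·GL_n(𝒪), and for k ∈ GL_n(𝒪), W̃(k) = (-1)ⁿ ℓ^{n(n+1)(n+2)/6} W_{n+1}(1) if v(k_{ij}) > i-j for all i > j, and W̃(k) = 0 otherwise. -/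

import Mathlib

open Matrix

namespace Stmt12

variable {F : Type*} [Field F]

/-- `g ∈ GL_m(O)`: the entries of `g` and of `g⁻¹` lie in `O`. -/
def InGLO (O : Subring F) {m : ℕ} (g : GL (Fin m) F) : Prop :=
  (∀ i j, (g : Matrix (Fin m) (Fin m) F) i j ∈ O) ∧
  (∀ i j, ((g⁻¹ : GL (Fin m) F) : Matrix (Fin m) (Fin m) F) i j ∈ O)

/-- `η ∈ φ⁻¹ N_m(O) φ`, i.e. `η` is upper-triangular unipotent with
`ϖ^{j-i} η_{ij} ∈ O` for `i < j` (where `φ = diag(ϖ⁻¹,…,ϖ^{-m})`). -/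
def InConjN (O : Subring F) (ϖ : F) {m : ℕ} (η : GL (Fin m) F) : Prop :=
  (∀ i, (η : Matrix (Fin m) (Fin m) F) i i = 1) ∧
  (∀ i j, j < i → (η : Matrix (Fin m) (Fin m) F) i j = 0) ∧
  (∀ i j : Fin m, i < j →
    ϖ ^ ((j : ℕ) - (i : ℕ)) * (η : Matrix (Fin m) (Fin m) F) i j ∈ O)

/-- `ν ∈ N_m(O)`: upper-triangular unipotent with entries in `O`. -/
def InNO (O : Subring F) {m : ℕ} (ν : GL (Fin m) F) : Prop :=
  (∀ i, (ν : Matrix (Fin m) (Fin m) F) i i = 1) ∧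
  (∀ i j, j < i → (ν : Matrix (Fin m) (Fin m) F) i j = 0) ∧
  (∀ i j : Fin m, i < j → (ν : Matrix (Fin m) (Fin m) F) i j ∈ O)

/-- `s(η)`: the number of integral entries on the superdiagonal of `η`. -/
noncomputable def sInt (O : Subring F) {m : ℕ} (η : GL (Fin (m + 1)) F) : ℕ :=
  Nat.card {i : Fin m //
    (η : Matrix (Fin (m + 1)) (Fin (m + 1)) F) i.castSucc i.succ ∈ O}

/-- The standing hypotheses on `O`, `ϖ`, `ℓ`, `ψ`. -/
structure Loc (O : Subring F) (ϖ : F) (ℓ : ℕ) (ψ : F → ℂ) : Prop where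
  hϖO : ϖ ∈ O
  hϖ0 : ϖ ≠ 0
  hval : ∀ x : F, x ≠ 0 → ∃ (k : ℤ) (w : F), w ∈ O ∧ w⁻¹ ∈ O ∧ x = ϖ ^ k * w
  hres : ∀ k : ℕ, ∃ T : Finset F, (↑T : Set F) ⊆ (O : Set F) ∧ T.card = ℓ ^ k ∧
      ∀ y ∈ O, ∃! r, r ∈ T ∧ ∃ d ∈ O, y - r = ϖ ^ k * d
  hψadd : ∀ x y : F, ψ (x + y) = ψ x * ψ y
  hψO : ∀ x ∈ O, ψ x = 1
  hψnt : ∃ y : F, ϖ * y ∈ O ∧ ψ y ≠ 1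

/-- `x ∈ ϖ^m O`. -/
def V (O : Subring F) (ϖ : F) (m : ℤ) (x : F) : Prop := ϖ ^ (-m) * x ∈ O

/-- Upper triangular unipotent. -/
def UT {m : ℕ} (u : GL (Fin m) F) : Prop :=
  (∀ i j, j < i → (u : Matrix (Fin m) (Fin m) F) i j = 0) ∧
  (∀ i, (u : Matrix (Fin m) (Fin m) F) i i = 1)

section basics
variable {O : Subring F} {ϖ : F} {ℓ : ℕ} {ψ : F → ℂ}

theorem V_zero_iff {x : F} : V O ϖ 0 x ↔ x ∈ O := by simp [V]

theorem V_zero (m : ℤ) : V O ϖ m 0 := by simp [V, O.zero_mem]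

theorem V.add {m : ℤ} {x y : F} (hx : V O ϖ m x) (hy : V O ϖ m y) : V O ϖ m (x + y) := by
  unfold V at *; rw [mul_add]; exact O.add_mem hx hy

theorem V.neg {m : ℤ} {x : F} (hx : V O ϖ m x) : V O ϖ m (-x) := by
  unfold V at *; rw [mul_neg]; exact O.neg_mem hx

theorem V.sub {m : ℤ} {x y : F} (hx : V O ϖ m x) (hy : V O ϖ m y) : V O ϖ m (x - y) := by
  rw [sub_eq_add_neg]; exact hx.add hy.neg

theorem V_sum {ι : Type*} {m : ℤ} (s : Finset ι) (f : ι → F) (h : ∀ i ∈ s, V O ϖ m (f i)) :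
    V O ϖ m (∑ i ∈ s, f i) := by
  unfold V at *; rw [Finset.mul_sum]; exact O.sum_mem h

namespace Loc


theorem vmul (L : Loc O ϖ ℓ ψ) {a b : ℤ} {x y : F} (hx : V O ϖ a x) (hy : V O ϖ b y) :
    V O ϖ (a + b) (x * y) := by
  unfold V at *
  have := O.mul_mem hx hy
  rw [neg_add, zpow_add₀ L.hϖ0]
  convert this using 1; ring

theorem vmono (L : Loc O ϖ ℓ ψ) {a b : ℤ} {x : F} (hx : V O ϖ a x) (h : b ≤ a) :
    V O ϖ b x := by
  unfold V at *
  obtain ⟨k, rfl⟩ := Int.le.dest h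
  have h2 := O.mul_mem (O.pow_mem L.hϖO k) hx
  convert h2 using 1
  rw [neg_add, zpow_add₀ L.hϖ0, _root_.zpow_neg _ (k : ℤ), zpow_natCast]
  have := pow_ne_zero k L.hϖ0
  field_simp

theorem vmulO (L : Loc O ϖ ℓ ψ) {a : ℤ} {x y : F} (hx : V O ϖ a x) (hy : y ∈ O) :
    V O ϖ a (x * y) := by
  have := L.vmul hx (V_zero_iff (ϖ := ϖ) |>.2 hy)
  simpa using this

theorem vOmul (L : Loc O ϖ ℓ ψ) {a : ℤ} {x y : F} (hx : V O ϖ a x) (hy : y ∈ O) :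
    V O ϖ a (y * x) := by
  rw [mul_comm]; exact L.vmulO hx hy

theorem vO (L : Loc O ϖ ℓ ψ) {a : ℤ} {x : F} (hx : V O ϖ a x) (h : 0 ≤ a) : x ∈ O :=
  V_zero_iff.1 (L.vmono hx h)

theorem v_nat (L : Loc O ϖ ℓ ψ) {k : ℕ} {x : F} :
    V O ϖ (k : ℤ) x ↔ ∃ d ∈ O, x = ϖ ^ k * d := by
  have := pow_ne_zero k L.hϖ0
  constructor
  · intro h
    refine ⟨_, h, ?_⟩
    rw [_root_.zpow_neg, zpow_natCast]; field_simp
  · rintro ⟨d, hd, rfl⟩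
    unfold V
    rw [_root_.zpow_neg, zpow_natCast]
    convert hd using 1; field_simp

theorem v_negnat (L : Loc O ϖ ℓ ψ) {k : ℕ} {x : F} :
    V O ϖ (-(k : ℤ)) x ↔ ϖ ^ k * x ∈ O := by
  unfold V; rw [neg_neg, zpow_natCast]

theorem psi_zero (L : Loc O ϖ ℓ ψ) : ψ 0 = 1 := L.hψO 0 O.zero_mem

theorem psi_ne (L : Loc O ϖ ℓ ψ) (x : F) : ψ x ≠ 0 := by
  intro h
  have := L.hψadd x (-x)
  rw [h, add_neg_cancel, L.psi_zero] at this
  simp at this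

theorem psi_neg (L : Loc O ϖ ℓ ψ) (x : F) : ψ (-x) = (ψ x)⁻¹ := by
  have := L.hψadd x (-x)
  rw [add_neg_cancel, L.psi_zero] at this
  exact eq_inv_of_mul_eq_one_right this.symm

theorem psi_sum (L : Loc O ϖ ℓ ψ) {ι : Type*} (s : Finset ι) (f : ι → F) :
    ψ (∑ i ∈ s, f i) = ∏ i ∈ s, ψ (f i) := by
  classical
  induction s using Finset.induction_on with
  | empty => simp [L.psi_zero]
  | insert a s ha ih => rw [Finset.sum_insert ha, Finset.prod_insert ha, L.hψadd, ih]

theorem psi_cong (L : Loc O ϖ ℓ ψ) {x y : F} (h : x - y ∈ O) : ψ x = ψ y := by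
  have := L.hψadd (x - y) y
  rw [L.hψO _ h] at this
  simpa using this

/-- conductor of `ψ` -/
theorem psi_cond (L : Loc O ϖ ℓ ψ) {m : ℤ} {z : F} (h : ∀ x, V O ϖ (-m) x → ψ (z * x) = 1) :
    V O ϖ m z := by
  by_cases hz : z = 0
  · rw [hz]; exact V_zero m
  obtain ⟨k, w, hw, hw', rfl⟩ := L.hval z hz
  have hw0 : w ≠ 0 := by rintro rfl; simp at hz
  obtain ⟨y, hy, hy1⟩ := L.hψnt
  by_cases hk : m ≤ k
  · have : V O ϖ k (ϖ ^ k * w) := by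
      unfold V; rw [← mul_assoc, ← zpow_add₀ L.hϖ0]; simpa using hw
    exact L.vmono this hk
  · exfalso
    apply hy1
    have hk' := zpow_ne_zero k L.hϖ0
    have h1 := h (ϖ ^ (-k) * w⁻¹ * y) ?_
    · rw [← h1]; congr 1; rw [_root_.zpow_neg]; field_simp
    · have e1 : V O ϖ (-1) y := by unfold V; simpa using hy
      have e2 : V O ϖ (-k) (ϖ ^ (-k) * w⁻¹) := by
        unfold V; rw [← mul_assoc, ← zpow_add₀ L.hϖ0]; simpa using hw'
      exact L.vmono (L.vmul e2 e1) (by omega)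

theorem not_v (L : Loc O ϖ ℓ ψ) : ¬ V O ϖ 1 1 := by
  intro h
  obtain ⟨y, hy, hy1⟩ := L.hψnt
  apply hy1
  apply L.hψO
  unfold V at h
  have := O.mul_mem h hy
  convert this using 1
  have := L.hϖ0
  simp; field_simp

theorem unit_of (L : Loc O ϖ ℓ ψ) {r : F} (hr : r ∈ O) (h : ¬ V O ϖ 1 r) : r ≠ 0 ∧ r⁻¹ ∈ O := by
  have hr0 : r ≠ 0 := by rintro rfl; exact h (V_zero _)
  refine ⟨hr0, ?_⟩
  obtain ⟨k, w, hw, hw', rfl⟩ := L.hval r hr0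
  have hk : k ≤ 0 := by
    by_contra hk
    apply h
    have : V O ϖ k (ϖ ^ k * w) := by
      unfold V; rw [← mul_assoc, ← zpow_add₀ L.hϖ0]; simpa using hw
    exact L.vmono this (by omega)
  rw [mul_inv, ← _root_.zpow_neg]
  apply O.mul_mem _ hw'
  obtain ⟨m, hm⟩ := Int.eq_ofNat_of_zero_le (by omega : 0 ≤ -k)
  rw [hm, zpow_natCast]; exact O.pow_mem L.hϖO m

theorem unit_congr (L : Loc O ϖ ℓ ψ) {r e : F} (he : e ∈ O) (he' : e⁻¹ ∈ O) (he0 : e ≠ 0)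
    (h : V O ϖ 1 (r - e)) : r ∈ O ∧ r⁻¹ ∈ O ∧ r ≠ 0 := by
  have hr : r ∈ O := by
    have := O.add_mem (L.vO h (by omega)) he
    simpa using this
  have hnv : ¬ V O ϖ 1 r := by
    intro h1
    have h2 := L.vmulO (h1.sub h) he'
    apply L.not_v
    convert h2 using 1
    field_simp; ring
  obtain ⟨a, b⟩ := L.unit_of hr hnv
  exact ⟨hr, b, a⟩

end Loc

theorem inGLO_of_det {m : ℕ} (g : GL (Fin m) F)
    (h : ∀ i j, (g : Matrix (Fin m) (Fin m) F) i j ∈ O)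
    (hd : (g : Matrix (Fin m) (Fin m) F).det⁻¹ ∈ O) : InGLO O g := by
  refine ⟨h, ?_⟩
  intro i j
  have e : ((g⁻¹ : GL (Fin m) F) : Matrix (Fin m) (Fin m) F)
      = (g : Matrix (Fin m) (Fin m) F)⁻¹ := by simp
  rw [e, Matrix.inv_def, Ring.inverse_eq_inv', Matrix.smul_apply, smul_eq_mul]
  apply O.mul_mem hd
  rw [Matrix.adjugate_apply, Matrix.det_apply]
  apply O.sum_mem
  intro σ _
  rw [Units.smul_def, zsmul_eq_mul]
  apply O.mul_mem
  · exact intCast_mem O _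
  apply O.prod_mem
  intro l _
  rw [Matrix.updateRow_apply]
  split_ifs
  · rw [Pi.single_apply]; split_ifs
    · exact O.one_mem
    · exact O.zero_mem
  · exact h _ _

theorem InGLO.mul {m : ℕ} {g h : GL (Fin m) F} (hg : InGLO O g) (hh : InGLO O h) :
    InGLO O (g * h) := by
  constructor
  · intro i j
    rw [Units.val_mul, Matrix.mul_apply]
    exact O.sum_mem fun l _ => O.mul_mem (hg.1 _ _) (hh.1 _ _)
  · intro i j
    rw [_root_.mul_inv_rev, Units.val_mul, Matrix.mul_apply]
    exact O.sum_mem fun l _ => O.mul_mem (hh.2 _ _) (hg.2 _ _)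

theorem InGLO.inv {m : ℕ} {g : GL (Fin m) F} (hg : InGLO O g) : InGLO O g⁻¹ :=
  ⟨hg.2, by rw [inv_inv]; exact hg.1⟩

theorem UT.one {m : ℕ} : UT (1 : GL (Fin m) F) := by
  refine ⟨fun i j h => ?_, fun i => ?_⟩
  · rw [Units.val_one, Matrix.one_apply_ne h.ne']
  · simp

theorem UT.bt {m : ℕ} {u : GL (Fin m) F} (hu : UT u) :
    Matrix.BlockTriangular (u : Matrix (Fin m) (Fin m) F) id := fun i j h => hu.1 i j h

theorem UT.det {m : ℕ} {u : GL (Fin m) F} (hu : UT u) :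
    (u : Matrix (Fin m) (Fin m) F).det = 1 := by
  rw [Matrix.det_of_isUpperTriangular hu.bt]
  simp [hu.2]

theorem bt_mul_diag {m : ℕ} {M N : Matrix (Fin m) (Fin m) F} (hM : ∀ i j, j < i → M i j = 0)
    (hN : ∀ i j, j < i → N i j = 0) (i : Fin m) : (M * N) i i = M i i * N i i := by
  rw [Matrix.mul_apply, Finset.sum_eq_single i]
  · intro l _ hl
    rcases lt_or_gt_of_ne hl with h | h
    · rw [hM _ _ h, zero_mul]
    · rw [hN _ _ h, mul_zero]
  · simp

theorem UT.mul {m : ℕ} {u v : GL (Fin m) F} (hu : UT u) (hv : UT v) : UT (u * v) := by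
  refine ⟨fun i j h => ?_, fun i => ?_⟩
  · rw [Units.val_mul]; exact (hu.bt.mul hv.bt) h
  · rw [Units.val_mul, bt_mul_diag hu.1 hv.1, hu.2, hv.2, one_mul]

theorem UT.inv {m : ℕ} {u : GL (Fin m) F} (hu : UT u) : UT u⁻¹ := by
  have e : ((u⁻¹ : GL (Fin m) F) : Matrix (Fin m) (Fin m) F)
      = (u : Matrix (Fin m) (Fin m) F)⁻¹ := by simp
  have h1 : ∀ i j, j < i → ((u⁻¹ : GL (Fin m) F) : Matrix (Fin m) (Fin m) F) i j = 0 := by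
    intro i j h
    rw [e]
    haveI : Invertible (u : Matrix (Fin m) (Fin m) F) := Units.invertible u
    exact Matrix.blockTriangular_inv_of_blockTriangular hu.bt h
  refine ⟨h1, fun i => ?_⟩
  have h2 := bt_mul_diag hu.1 h1 i
  rw [← Units.val_mul, mul_inv_cancel, hu.2, one_mul] at h2
  rw [← h2]; simp

theorem inNO_iff {m : ℕ} {u : GL (Fin m) F} : InNO O u ↔ UT u ∧ InGLO O u := by
  constructor
  · rintro ⟨h1, h2, h3⟩
    refine ⟨⟨h2, h1⟩, inGLO_of_det u ?_ ?_⟩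
    · intro i j
      rcases lt_trichotomy i j with h | h | h
      · exact h3 _ _ h
      · rw [h, h1]; exact O.one_mem
      · rw [h2 _ _ h]; exact O.zero_mem
    · rw [UT.det ⟨h2, h1⟩, inv_one]; exact O.one_mem
  · rintro ⟨⟨h2, h1⟩, h3⟩
    exact ⟨h1, h2, fun i j _ => h3.1 i j⟩

/-- Unitriangular element from a matrix. -/
theorem exists_UT {m : ℕ} (M : Matrix (Fin m) (Fin m) F) (h1 : ∀ i, M i i = 1)
    (h2 : ∀ i j, j < i → M i j = 0) :
    ∃ u : GL (Fin m) F, (u : Matrix (Fin m) (Fin m) F) = M ∧ UT u := by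
  have hd : M.det = 1 := by
    rw [Matrix.det_of_isUpperTriangular (fun i j h => h2 i j h)]; simp [h1]
  refine ⟨Matrix.GeneralLinearGroup.mkOfDetNeZero M (by rw [hd]; exact one_ne_zero), rfl, h2, h1⟩

end basics

/-- The level function defining the group `J`. -/
def lev {m : ℕ} (i j : Fin m) : ℤ := (i : ℤ) - (j : ℤ) + if j ≤ i then 1 else 0

/-- `J = φ⁻¹ I⁺ φ` with `I⁺` the pro-unipotent Iwahori. -/
def InJ (O : Subring F) (ϖ : F) {m : ℕ} (g : GL (Fin m) F) : Prop :=
  ∀ i j, V O ϖ (lev i j) ((g : Matrix (Fin m) (Fin m) F) i j - (1 : Matrix (Fin m) (Fin m) F) i j)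

/-- The character `ψ_a`. -/
noncomputable def psiA (ψ : F → ℂ) {n : ℕ} (a : Fin n → F) (g : GL (Fin (n + 1)) F) : ℂ :=
  ψ (∑ i : Fin n, a i * (g : Matrix (Fin (n + 1)) (Fin (n + 1)) F) i.castSucc i.succ)

/-- The twisted sums. -/
noncomputable def fA (ψ : F → ℂ) {n : ℕ} (W : GL (Fin (n + 1)) F → ℂ)
    (S : Finset (GL (Fin (n + 1)) F)) (a : Fin n → F) (g : GL (Fin (n + 1)) F) : ℂ :=
  ∑ η ∈ S, psiA ψ a η * W (g * η)

section groupJ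
variable {O : Subring F} {ϖ : F} {ℓ : ℕ} {ψ : F → ℂ}

theorem lev_add {m : ℕ} (i l j : Fin m) : lev i j ≤ lev i l + lev l j := by
  unfold lev
  simp only [Fin.le_def]
  split_ifs <;> omega

theorem J_prod_expand {m : ℕ} (g h : Matrix (Fin m) (Fin m) F) :
    g * h - 1 = (g - 1) + (h - 1) + (g - 1) * (h - 1) := by noncomm_ring

theorem InJ.one {m : ℕ} : InJ O ϖ (1 : GL (Fin m) F) := by
  intro i j; simp [V_zero]

theorem InJ.mul (L : Loc O ϖ ℓ ψ) {m : ℕ} {g h : GL (Fin m) F} (hg : InJ O ϖ g)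
    (hh : InJ O ϖ h) : InJ O ϖ (g * h) := by
  intro i j
  have e := congrFun (congrFun (J_prod_expand (g : Matrix (Fin m) (Fin m) F) h) i) j
  rw [Units.val_mul, ← Matrix.sub_apply, e]
  refine V.add (V.add (hg i j) (hh i j)) ?_
  rw [Matrix.mul_apply]
  refine V_sum _ _ fun l _ => ?_
  exact L.vmono (L.vmul (hg i l) (hh l j)) (lev_add i l j)

theorem psiA_mul (L : Loc O ϖ ℓ ψ) {n : ℕ} {a : Fin n → F} (ha : ∀ i, a i ∈ O)
    {g h : GL (Fin (n + 1)) F} (hg : InJ O ϖ g) (hh : InJ O ϖ h) :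
    psiA ψ a (g * h) = psiA ψ a g * psiA ψ a h := by
  unfold psiA
  rw [← L.hψadd, ← Finset.sum_add_distrib]
  apply L.psi_cong
  rw [← Finset.sum_sub_distrib]
  apply O.sum_mem
  intro i _
  rw [← mul_add, ← mul_sub]
  apply O.mul_mem (ha i)
  have e := congrFun (congrFun (J_prod_expand (g : Matrix (Fin (n+1)) (Fin (n+1)) F) h)
    i.castSucc) i.succ
  have hne : (1 : Matrix (Fin (n+1)) (Fin (n+1)) F) i.castSucc i.succ = 0 :=
    Matrix.one_apply_ne (Fin.castSucc_lt_succ).ne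
  simp only [Matrix.sub_apply, Matrix.add_apply, hne, sub_zero] at e
  rw [Units.val_mul, e, add_sub_cancel_left, Matrix.mul_apply]
  apply O.sum_mem
  intro l _
  refine L.vO (L.vmul (hg i.castSucc l) (hh l i.succ)) ?_
  unfold lev
  simp only [Fin.le_def, Fin.val_castSucc, Fin.val_succ]
  split_ifs <;> push_cast <;> omega

theorem psiA_GLO (L : Loc O ϖ ℓ ψ) {n : ℕ} {a : Fin n → F} (ha : ∀ i, a i ∈ O)
    {g : GL (Fin (n + 1)) F} (hg : ∀ i j, (g : Matrix (Fin (n+1)) (Fin (n+1)) F) i j ∈ O) :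
    psiA ψ a g = 1 := by
  apply L.hψO
  exact O.sum_mem fun i _ => O.mul_mem (ha i) (hg _ _)

theorem inConjN_iff (L : Loc O ϖ ℓ ψ) {m : ℕ} {u : GL (Fin m) F} :
    InConjN O ϖ u ↔ UT u ∧ InJ O ϖ u := by
  constructor
  · rintro ⟨h1, h2, h3⟩
    refine ⟨⟨h2, h1⟩, fun i j => ?_⟩
    rcases lt_trichotomy i j with h | h | h
    · have := L.v_negnat.2 (h3 _ _ h)
      rw [Matrix.one_apply_ne h.ne, sub_zero]
      convert this using 1
      unfold lev
      rw [if_neg (not_le.2 h)]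
      have : (i : ℕ) < j := h
      omega
    · subst h; rw [h1]; simp [V_zero]
    · rw [h2 _ _ h, Matrix.one_apply_ne h.ne']; simp [V_zero]
  · rintro ⟨⟨h2, h1⟩, h3⟩
    refine ⟨h1, h2, fun i j h => ?_⟩
    have := h3 i j
    rw [Matrix.one_apply_ne h.ne, sub_zero] at this
    apply L.v_negnat.1
    convert this using 1
    unfold lev
    rw [if_neg (not_le.2 h)]
    have : (i : ℕ) < j := h
    omega

theorem lower_GLO (L : Loc O ϖ ℓ ψ) {m : ℕ} {e : Fin m → F} (he : ∀ i, e i ∈ O)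
    (he' : ∀ i, (e i)⁻¹ ∈ O) (he0 : ∀ i, e i ≠ 0) {g : GL (Fin m) F}
    (h1 : ∀ i j, i < j → (g : Matrix (Fin m) (Fin m) F) i j = 0)
    (h2 : ∀ i, V O ϖ 1 ((g : Matrix (Fin m) (Fin m) F) i i - e i))
    (h3 : ∀ i j, j < i → (g : Matrix (Fin m) (Fin m) F) i j ∈ O) : InGLO O g := by
  have hu := fun i => L.unit_congr (he i) (he' i) (he0 i) (h2 i)
  apply inGLO_of_det
  · intro i j
    rcases lt_trichotomy i j with h | h | h
    · rw [h1 _ _ h]; exact O.zero_mem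
    · subst h; exact (hu i).1
    · exact h3 _ _ h
  · rw [Matrix.det_of_isLowerTriangular _ (fun i j h => h1 i j h), ← Finset.prod_inv_distrib]
    exact O.prod_mem fun i _ => (hu i).2.1

theorem lowerJ_GLO (L : Loc O ϖ ℓ ψ) {m : ℕ} {g : GL (Fin m) F} (hg : InJ O ϖ g)
    (h1 : ∀ i j, i < j → (g : Matrix (Fin m) (Fin m) F) i j = 0) : InGLO O g := by
  refine lower_GLO L (e := fun _ => 1) (fun _ => O.one_mem) (fun _ => by simp [O.one_mem])
    (fun _ => one_ne_zero) h1 ?_ ?_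
  · intro i
    have := hg i i
    simpa [lev] using this
  · intro i j h
    have := hg i j
    rw [Matrix.one_apply_ne h.ne', sub_zero] at this
    refine L.vO this ?_
    unfold lev
    have : (j : ℕ) < i := h
    split_ifs <;> omega

theorem exists_col {m : ℕ} (p : Fin m) (y : Fin m → F) :
    ∃ E : GL (Fin m) F, UT E ∧
      (∀ a b, (E : Matrix (Fin m) (Fin m) F) a b
        = (1 : Matrix (Fin m) (Fin m) F) a b + if a < p ∧ b = p then y a else 0) ∧
      ∀ (g : Matrix (Fin m) (Fin m) F) a b,
        ((E : Matrix (Fin m) (Fin m) F) * g) a b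
          = g a b + if a < p then y a * g p b else 0 := by
  obtain ⟨E, hE, hU⟩ := exists_UT
    ((1 : Matrix (Fin m) (Fin m) F) + Matrix.of fun a b => if a < p ∧ b = p then y a else 0)
    (by
      intro i
      simp only [Matrix.add_apply, Matrix.one_apply_eq, Matrix.of_apply]
      rw [if_neg, add_zero]
      rintro ⟨h, h'⟩; exact h.ne h')
    (by
      intro i j h
      simp only [Matrix.add_apply, Matrix.one_apply_ne h.ne', Matrix.of_apply]
      rw [if_neg, add_zero]
      rintro ⟨h1, h2⟩; subst h2; exact lt_asymm h h1)
  refine ⟨E, hU, ?_, ?_⟩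
  · intro a b; rw [hE]; rfl
  · intro g a b
    rw [hE, add_mul, one_mul, Matrix.add_apply]
    congr 1
    rw [Matrix.mul_apply]
    simp only [Matrix.of_apply]
    by_cases h : a < p
    · simp [h]
    · simp [h]

theorem col_inJ {m : ℕ} {p : Fin m} {y : Fin m → F}
    (hy : ∀ a, a < p → V O ϖ ((a : ℤ) - p) (y a)) {E : GL (Fin m) F}
    (hE : ∀ a b, (E : Matrix (Fin m) (Fin m) F) a b
        = (1 : Matrix (Fin m) (Fin m) F) a b + if a < p ∧ b = p then y a else 0) :
    InJ O ϖ E := by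
  intro i j
  rw [hE, add_sub_cancel_left]
  split_ifs with h
  · obtain ⟨h, rfl⟩ := h
    have := hy i h
    unfold lev
    rwa [if_neg (not_le.2 h), add_zero]
  · exact V_zero _

theorem J_diag_unit (L : Loc O ϖ ℓ ψ) {m : ℕ} {g : GL (Fin m) F} (hg : InJ O ϖ g) (p : Fin m) :
    (g : Matrix (Fin m) (Fin m) F) p p ∈ O ∧ ((g : Matrix (Fin m) (Fin m) F) p p)⁻¹ ∈ O ∧
      (g : Matrix (Fin m) (Fin m) F) p p ≠ 0 := by
  refine L.unit_congr O.one_mem (by simp [O.one_mem]) one_ne_zero ?_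
  have := hg p p
  simpa [lev] using this

theorem J_factor_aux (L : Loc O ϖ ℓ ψ) {m : ℕ} {j : GL (Fin m) F} (hj : InJ O ϖ j) (d : ℕ) :
    ∃ η κ : GL (Fin m) F, UT η ∧ InJ O ϖ η ∧ InJ O ϖ κ ∧ j = η * κ ∧
      ∀ a b : Fin m, a < b → m ≤ (b : ℕ) + d → (κ : Matrix (Fin m) (Fin m) F) a b = 0 := by
  induction d with
  | zero =>
    refine ⟨1, j, UT.one, InJ.one, hj, by simp, ?_⟩
    intro a b _ h; omega
  | succ d ih =>
    obtain ⟨η, κ, h1, h2, h3, h4, h5⟩ := ih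
    by_cases hd : m ≤ d
    · exact ⟨η, κ, h1, h2, h3, h4, fun a b h _ => h5 a b h (by omega)⟩
    obtain ⟨p, hp⟩ : ∃ p : Fin m, (p : ℕ) + d + 1 = m := ⟨⟨m - d - 1, by omega⟩, by simp; omega⟩
    obtain ⟨hu1, hu2, hu3⟩ := J_diag_unit L h3 p
    set y : Fin m → F := fun a => (κ : Matrix (Fin m) (Fin m) F) a p *
      ((κ : Matrix (Fin m) (Fin m) F) p p)⁻¹ with hy
    have hyV : ∀ a, a < p → V O ϖ ((a : ℤ) - p) (y a) := by
      intro a ha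
      apply L.vmulO _ hu2
      have := h3 a p
      rw [Matrix.one_apply_ne ha.ne, sub_zero] at this
      unfold lev at this
      rwa [if_neg (not_le.2 ha), add_zero] at this
    obtain ⟨E, hEU, hE, hEm⟩ := exists_col p y
    obtain ⟨E', hEU', hE', hEm'⟩ := exists_col p (fun a => - y a)
    refine ⟨η * E, E' * κ, h1.mul hEU, h2.mul L (col_inJ hyV hE),
      (col_inJ (fun a ha => (hyV a ha).neg) hE').mul L h3, ?_, ?_⟩
    · have : E * E' = 1 := by
        apply Units.ext
        ext a b
        rw [Units.val_mul, hEm, hE', hE']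
        by_cases h : a < p
        · simp [h]
          by_cases hb : b = p
          · subst hb; simp
          · simp [hb, Matrix.one_apply_ne (Ne.symm hb)]
        · simp [h]
      rw [h4, mul_assoc, ← mul_assoc E, this, one_mul]
    · intro a b hab hb
      rw [Units.val_mul, hEm']
      by_cases hbp : b = p
      · subst hbp
        rw [if_pos hab, hy]
        field_simp; ring
      · have hpb : p < b := by
          have : (b : ℕ) ≠ p := fun h => hbp (Fin.ext h)
          show (p : ℕ) < b
          omega
        have hpb' : (p : ℕ) < b := hpb
        rw [h5 a b hab (by omega), h5 p b hpb (by omega)]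
        simp

theorem J_factor (L : Loc O ϖ ℓ ψ) {m : ℕ} {j : GL (Fin m) F} (hj : InJ O ϖ j) :
    ∃ η κ : GL (Fin m) F, InConjN O ϖ η ∧ InJ O ϖ κ ∧ InGLO O κ ∧ j = η * κ := by
  obtain ⟨η, κ, h1, h2, h3, h4, h5⟩ := J_factor_aux L hj m
  exact ⟨η, κ, (inConjN_iff L).2 ⟨h1, h2⟩, h3,
    lowerJ_GLO L h3 (fun a b h => h5 a b h (by omega)), h4⟩

theorem NO_inJ (L : Loc O ϖ ℓ ψ) {m : ℕ} {ν : GL (Fin m) F} (h : InNO O ν) : InJ O ϖ ν := by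
  refine ((inConjN_iff L).1 ⟨h.1, h.2.1, fun i j hij => ?_⟩).2
  exact O.mul_mem (O.pow_mem L.hϖO _) (h.2.2 i j hij)

/-- Equivariance of `f_a` under `J`. -/
theorem fA_equiv (L : Loc O ϖ ℓ ψ) {n : ℕ} {W : GL (Fin (n + 1)) F → ℂ}
    (hWright : ∀ g k : GL (Fin (n + 1)) F, InGLO O k → W (g * k) = W g)
    {S : Finset (GL (Fin (n + 1)) F)}
    (hSmem : ∀ η ∈ S, InConjN O ϖ η)
    (hSrep : ∀ η : GL (Fin (n + 1)) F, InConjN O ϖ η →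
      ∃! ρ, ρ ∈ S ∧ ∃ ν : GL (Fin (n + 1)) F, InNO O ν ∧ η = ρ * ν)
    {a : Fin n → F} (ha : ∀ i, a i ∈ O) {j : GL (Fin (n + 1)) F} (hj : InJ O ϖ j)
    (g : GL (Fin (n + 1)) F) :
    psiA ψ a j * fA ψ W S a (g * j) = fA ψ W S a g := by
  classical
  have key : ∀ η : GL (Fin (n + 1)) F, ∃ ρ, η ∈ S → (ρ ∈ S ∧ InJ O ϖ ρ ∧
      ∃ c : GL (Fin (n + 1)) F, InJ O ϖ c ∧ InGLO O c ∧ j * η = ρ * c) := by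
    intro η
    by_cases hη : η ∈ S
    · obtain ⟨η', κ, h1, h2, h3, h4⟩ := J_factor L (hj.mul L ((inConjN_iff L).1 (hSmem η hη)).2)
      obtain ⟨ρ, ⟨h5, ν, h6, h7⟩, -⟩ := hSrep η' h1
      refine ⟨ρ, fun _ => ⟨h5, ((inConjN_iff L).1 (hSmem ρ h5)).2, ν * κ, (NO_inJ L h6).mul L h2,
        (inNO_iff.1 h6).2.mul h3, ?_⟩⟩
      rw [h4, h7, mul_assoc]
    · exact ⟨1, fun h => absurd h hη⟩
  choose ρ hρ using key
  have hinj : Set.InjOn ρ S := by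
    intro x hx y hy hxy
    obtain ⟨h1, -, c, h2, h3, h4⟩ := hρ x hx
    obtain ⟨h1', -, c', h2', h3', h4'⟩ := hρ y hy
    have e : x = y * (c'⁻¹ * c) := by
      apply mul_left_cancel (a := j)
      rw [← mul_assoc, h4, h4', hxy]; group
    have hx' := ((inConjN_iff L).1 (hSmem x hx)).1
    have hy' := ((inConjN_iff L).1 (hSmem y hy)).1
    have hν : InNO O (c'⁻¹ * c) := by
      refine inNO_iff.2 ⟨?_, h3'.inv.mul h3⟩
      have : c'⁻¹ * c = y⁻¹ * x := by rw [e]; group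
      rw [this]; exact hy'.inv.mul hx'
    have h1N : InNO O (1 : GL (Fin (n+1)) F) := by
      refine inNO_iff.2 ⟨UT.one, ?_⟩
      have := h3.inv.mul h3
      rwa [inv_mul_cancel] at this
    exact (hSrep x (hSmem x hx)).unique ⟨hx, 1, h1N, by simp⟩ ⟨hy, _, hν, e⟩
  have himg : S.image ρ = S := by
    apply Finset.eq_of_subset_of_card_le
    · intro x hx
      obtain ⟨y, hy, rfl⟩ := Finset.mem_image.1 hx
      exact (hρ y hy).1
    · rw [Finset.card_image_of_injOn hinj]
  unfold fA
  conv_rhs => rw [← himg, Finset.sum_image hinj]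
  rw [Finset.mul_sum]
  apply Finset.sum_congr rfl
  intro η hη
  obtain ⟨h1, h2, c, h3, h4, h5⟩ := hρ η hη
  rw [← mul_assoc, ← psiA_mul L ha hj ((inConjN_iff L).1 (hSmem η hη)).2, mul_assoc, h5,
    psiA_mul L ha h2 h3, psiA_GLO L ha h4.1, ← mul_assoc, hWright _ _ h4, mul_one]

end groupJ

/-- All the data of the theorem. -/
structure Wh (O : Subring F) (ϖ : F) (ℓ : ℕ) (ψ : F → ℂ) (n : ℕ) (W : GL (Fin (n + 1)) F → ℂ)
    (S : Finset (GL (Fin (n + 1)) F)) : Prop where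
  L : Loc O ϖ ℓ ψ
  hWleft : ∀ u g : GL (Fin (n + 1)) F, UT u →
      W (u * g)
        = ψ (∑ i : Fin n, (u : Matrix (Fin (n + 1)) (Fin (n + 1)) F) i.castSucc i.succ)
          * W g
  hWright : ∀ g k : GL (Fin (n + 1)) F, InGLO O k → W (g * k) = W g
  hSmem : ∀ η ∈ S, InConjN O ϖ η
  hSrep : ∀ η : GL (Fin (n + 1)) F, InConjN O ϖ η →
      ∃! ρ, ρ ∈ S ∧ ∃ ν : GL (Fin (n + 1)) F, InNO O ν ∧ η = ρ * ν

/-- The diagonal signs. -/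
noncomputable def eA {n : ℕ} (a : Fin n → F) (i : Fin (n + 1)) : F :=
  ∏ j : Fin n with i ≤ j.castSucc, (-a j)

/-- `a` consists of units. -/
def UnitA (O : Subring F) {n : ℕ} (a : Fin n → F) : Prop :=
  ∀ i, a i ∈ O ∧ (a i)⁻¹ ∈ O ∧ a i ≠ 0

/-- The partially reduced form. -/
def Inv (O : Subring F) (ϖ : F) {n : ℕ} (a : Fin n → F) (p : ℕ) (g : GL (Fin (n + 1)) F) : Prop :=
  (∀ r c : Fin (n + 1), p ≤ (c : ℕ) → r < c →
    (g : Matrix (Fin (n + 1)) (Fin (n + 1)) F) r c = 0) ∧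
  (∀ r : Fin (n + 1), p ≤ (r : ℕ) →
    V O ϖ 1 ((g : Matrix (Fin (n + 1)) (Fin (n + 1)) F) r r - eA a r)) ∧
  (∀ r c : Fin (n + 1), p ≤ (r : ℕ) → c < r →
    V O ϖ ((r : ℤ) - c + 1) ((g : Matrix (Fin (n + 1)) (Fin (n + 1)) F) r c))

section support
variable {O : Subring F} {ϖ : F} {ℓ : ℕ} {ψ : F → ℂ} {n : ℕ} {W : GL (Fin (n + 1)) F → ℂ}
  {S : Finset (GL (Fin (n + 1)) F)} {a : Fin n → F}

theorem eA_last (a : Fin n → F) : eA a (Fin.last n) = 1 := by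
  unfold eA
  rw [Finset.filter_false_of_mem, Finset.prod_empty]
  intro x _
  exact not_le.2 (Fin.castSucc_lt_last x)

theorem eA_castSucc (a : Fin n → F) (i : Fin n) : eA a i.castSucc = -a i * eA a i.succ := by
  unfold eA
  have : (Finset.univ.filter fun j : Fin n => i.castSucc ≤ j.castSucc)
      = insert i (Finset.univ.filter fun j : Fin n => i.succ ≤ j.castSucc) := by
    ext j
    simp only [Finset.mem_filter, Finset.mem_univ, true_and, Finset.mem_insert, Fin.le_def,
      Fin.ext_iff, Fin.val_castSucc, Fin.val_succ]
    omega
  rw [this, Finset.prod_insert]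
  simp [Fin.le_def]

theorem eA_unit (ha : UnitA O a) (i : Fin (n + 1)) :
    eA a i ∈ O ∧ (eA a i)⁻¹ ∈ O ∧ eA a i ≠ 0 := by
  unfold eA
  refine ⟨O.prod_mem fun j _ => O.neg_mem (ha j).1, ?_, ?_⟩
  · rw [← Finset.prod_inv_distrib]
    refine O.prod_mem fun j _ => ?_
    rw [inv_neg]; exact O.neg_mem (ha j).2.1
  · exact Finset.prod_ne_zero_iff.2 fun j _ => neg_ne_zero.2 (ha j).2.2

theorem fA_left (H : Wh O ϖ ℓ ψ n W S) (a : Fin n → F) {u : GL (Fin (n + 1)) F} (hu : UT u)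
    (g : GL (Fin (n + 1)) F) :
    fA ψ W S a (u * g)
      = ψ (∑ i : Fin n, (u : Matrix (Fin (n + 1)) (Fin (n + 1)) F) i.castSucc i.succ)
        * fA ψ W S a g := by
  unfold fA
  rw [Finset.mul_sum]
  refine Finset.sum_congr rfl fun η _ => ?_
  rw [mul_assoc, H.hWleft u _ hu]; ring

theorem col_superdiag (p : Fin n) (y : Fin (n + 1) → F) (c : Fin n → F)
    {E : Matrix (Fin (n + 1)) (Fin (n + 1)) F}
    (hE : ∀ r s, E r s = (1 : Matrix (Fin (n + 1)) (Fin (n + 1)) F) r s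
      + if r < p.succ ∧ s = p.succ then y r else 0) :
    ∑ i : Fin n, c i * E i.castSucc i.succ = c p * y p.castSucc := by
  rw [Finset.sum_eq_single p]
  · rw [hE, Matrix.one_apply_ne (Fin.castSucc_lt_succ).ne, if_pos ⟨Fin.castSucc_lt_succ, rfl⟩,
      zero_add]
  · intro i _ hi
    rw [hE, Matrix.one_apply_ne (Fin.castSucc_lt_succ).ne, if_neg, add_zero, mul_zero]
    rintro ⟨-, h⟩
    exact hi (Fin.succ_injective _ h)
  · simp

theorem row_step (H : Wh O ϖ ℓ ψ n W S) (ha : UnitA O a) (p : Fin n) {g : GL (Fin (n + 1)) F}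
    (hne : fA ψ W S a g ≠ 0) (hI : Inv O ϖ a (p + 1) g) (b : Fin (n + 1)) (hb : b < p.succ) :
    V O ϖ ((p : ℤ) + 1 - b) ((g : Matrix (Fin (n + 1)) (Fin (n + 1)) F) p.castSucc b
      - if b = p.castSucc then eA a p.castSucc else 0) := by
  have L := H.L
  obtain ⟨hI1, hI2, hI3⟩ := hI
  have he := eA_unit (a := a) ha
  set q : Fin (n + 1) := p.succ with hq
  have hqv : (q : ℕ) = p + 1 := by simp [hq]
  -- the lower triangular matrix
  obtain ⟨κm, hκm⟩ : ∃ κm : Matrix (Fin (n + 1)) (Fin (n + 1)) F, ∀ r c, κm r c =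
      if r < q then (1 : Matrix (Fin (n + 1)) (Fin (n + 1)) F) r c else
        (eA a r)⁻¹ * (g : Matrix (Fin (n + 1)) (Fin (n + 1)) F) r c := ⟨fun r c => _, fun r c => rfl⟩
  have hge : ∀ {r : Fin (n + 1)}, ¬ r < q → (p : ℕ) + 1 ≤ r := by
    intro r hr
    have : ¬ (r : ℕ) < q := hr
    omega
  have hκlow : ∀ r c, r < c → κm r c = 0 := by
    intro r c h
    rw [hκm]
    split_ifs with h1
    · rw [Matrix.one_apply_ne h.ne]
    · rw [hI1 r c _ h, mul_zero]
      have := hge h1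
      have h' : (r : ℕ) < c := h
      omega
  have hκdiag : ∀ r, V O ϖ 1 (κm r r - 1) := by
    intro r
    rw [hκm]
    split_ifs with h1
    · simp [V_zero]
    · have := L.vOmul (hI2 r (hge h1)) (he r).2.1
      convert this using 1
      have := (he r).2.2
      field_simp
  have hκJ : ∀ r c, V O ϖ (lev r c) (κm r c - (1 : Matrix (Fin (n + 1)) (Fin (n + 1)) F) r c) := by
    intro r c
    rcases lt_trichotomy r c with h | h | h
    · rw [hκlow _ _ h, Matrix.one_apply_ne h.ne, sub_zero]; exact V_zero _
    · subst h; simpa [lev] using hκdiag r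
    · rw [Matrix.one_apply_ne h.ne', sub_zero, hκm]
      split_ifs with h1
      · rw [Matrix.one_apply_ne h.ne']; exact V_zero _
      · have := L.vOmul (hI3 r c (hge h1) h) (he r).2.1
        unfold lev
        rwa [if_pos h.le]
  have hκdet : κm.det ≠ 0 := by
    rw [Matrix.det_of_isLowerTriangular _ (fun i j h => hκlow i j h)]
    refine Finset.prod_ne_zero_iff.2 fun r _ => ?_
    exact (L.unit_congr O.one_mem (by simp [O.one_mem]) one_ne_zero (hκdiag r)).2.2
  set κ : GL (Fin (n + 1)) F := Matrix.GeneralLinearGroup.mkOfDetNeZero κm hκdet with hκ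
  have hκv : (κ : Matrix (Fin (n + 1)) (Fin (n + 1)) F) = κm := rfl
  have hκJ' : InJ O ϖ κ := by intro r c; rw [hκv]; exact hκJ r c
  have hκGLO : InGLO O κ := lowerJ_GLO L hκJ' (by intro r c h; rw [hκv]; exact hκlow r c h)
  -- the reduced matrix
  obtain ⟨G, hG⟩ : ∃ G : Matrix (Fin (n + 1)) (Fin (n + 1)) F, ∀ r c, G r c =
      if r < q then (g : Matrix (Fin (n + 1)) (Fin (n + 1)) F) r c else
        if r = c then eA a r else 0 := ⟨fun r c => _, fun r c => rfl⟩
  have hGκ : (g : Matrix (Fin (n + 1)) (Fin (n + 1)) F) = G * κm := by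
    ext r c
    rw [Matrix.mul_apply]
    by_cases hr : r < q
    · rw [Finset.sum_eq_single c]
      · rw [hG, if_pos hr]
        by_cases hc : c < q
        · rw [hκm, if_pos hc, Matrix.one_apply_eq, mul_one]
        · rw [hI1 r c (hge hc) (lt_of_lt_of_le hr (not_lt.1 hc)), zero_mul]
      · intro l _ hl
        rw [hG, if_pos hr]
        by_cases hc : l < q
        · rw [hκm, if_pos hc, Matrix.one_apply_ne hl, mul_zero]
        · rw [hI1 r l (hge hc) (lt_of_lt_of_le hr (not_lt.1 hc)), zero_mul]
      · simp
    · rw [Finset.sum_eq_single r]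
      · rw [hG, if_neg hr, if_pos rfl, hκm, if_neg hr, mul_inv_cancel_left₀ (he r).2.2]
      · intro l _ hl
        rw [hG, if_neg hr, if_neg hl.symm, zero_mul]
      · simp
  set g2 : GL (Fin (n + 1)) F := g * κ⁻¹ with hg2
  have hg2v : (g2 : Matrix (Fin (n + 1)) (Fin (n + 1)) F) = G := by
    rw [hg2, Units.val_mul, hGκ, ← hκv, mul_assoc, ← Units.val_mul, mul_inv_cancel, Units.val_one,
      mul_one]
  have hf2 : fA ψ W S a g2 ≠ 0 := by
    have := fA_equiv L H.hWright H.hSmem H.hSrep (fun i => (ha i).1) hκJ' g2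
    rw [psiA_GLO L (fun i => (ha i).1) hκGLO.1, one_mul, hg2, inv_mul_cancel_right] at this
    rw [hg2, ← this]; exact hne
  clear_value g2
  set z : F := (if b = p.castSucc then a p else 0) +
    (eA a q)⁻¹ * (g : Matrix (Fin (n + 1)) (Fin (n + 1)) F) p.castSucc b with hz
  have hzV : V O ϖ ((p : ℤ) + 1 - b) z := by
    apply L.psi_cond
    intro x hx
    obtain ⟨E, hEU, hE, hEm⟩ := exists_col q (Pi.single b x)
    obtain ⟨U, hUU, hU, hUm⟩ := exists_col q (fun r => (eA a q)⁻¹ *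
      (g : Matrix (Fin (n + 1)) (Fin (n + 1)) F) r b * x)
    have hEJ : InJ O ϖ E := by
      refine col_inJ ?_ hE
      intro r _
      by_cases hrb : r = b
      · subst hrb
        rw [Pi.single_eq_same]
        convert hx using 1
        rw [hqv]; push_cast; ring
      · rw [Pi.single_eq_of_ne hrb]; exact V_zero _
    have hcomm : g2 * E = U * g2 := by
      apply Units.ext
      ext r c
      rw [Units.val_mul, Units.val_mul, hUm, hg2v, Matrix.mul_apply]
      simp only [hE, mul_add, Finset.sum_add_distrib]
      congr 1
      · rw [← Matrix.mul_apply, mul_one]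
      · rw [Finset.sum_eq_single b]
        · rw [hG q c, if_neg (lt_irrefl q)]
          by_cases hc : c = q
          · subst hc
            rw [if_pos ⟨hb, rfl⟩, Pi.single_eq_same, if_pos rfl, hG]
            by_cases hr : r < q
            · rw [if_pos hr, if_pos hr]
              have := (he q).2.2
              field_simp
            · rw [if_neg hr, if_neg hr, if_neg, zero_mul]
              rintro rfl; exact hr hb
          · rw [if_neg (fun h => hc h.2), if_neg (Ne.symm hc)]; simp
        · intro l _ hl
          rw [Pi.single_eq_of_ne hl]; simp
        · simp
    have h1 := fA_equiv L H.hWright H.hSmem H.hSrep (fun i => (ha i).1) hEJ g2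
    rw [hcomm, fA_left H a hUU, ← mul_assoc] at h1
    have h2 := mul_right_cancel₀ hf2 (h1.trans (one_mul _).symm)
    have h3 := col_superdiag p (Pi.single b x) a hE
    have h4 := col_superdiag p _ (fun _ => (1 : F)) hU
    simp only [one_mul] at h4
    rw [psiA, h3, h4, ← L.hψadd] at h2
    rw [← h2]
    congr 1
    rw [hz, add_mul]
    congr 1
    by_cases hbp : b = p.castSucc
    · rw [if_pos hbp, hbp, Pi.single_eq_same]
    · rw [if_neg hbp, Pi.single_eq_of_ne (Ne.symm hbp)]; simp
  have h5 := L.vOmul hzV (he q).1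
  convert h5 using 1
  rw [hz, mul_add, mul_inv_cancel_left₀ (he q).2.2, eA_castSucc]
  split_ifs
  · ring
  · ring

theorem reduce (H : Wh O ϖ ℓ ψ n W S) (ha : UnitA O a) (p : ℕ) (hp : p ≤ n) :
    ∀ g : GL (Fin (n + 1)) F, fA ψ W S a g ≠ 0 → Inv O ϖ a p g →
      ∃ u : GL (Fin (n + 1)) F, UT u ∧ (∀ r, r ≠ Fin.last n →
        (u : Matrix (Fin (n + 1)) (Fin (n + 1)) F) r (Fin.last n) = 0) ∧ Inv O ϖ a 0 (u * g) := by
  induction p with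
  | zero =>
    intro g _ hI
    refine ⟨1, UT.one, fun r hr => ?_, by rwa [one_mul]⟩
    rw [Units.val_one, Matrix.one_apply_ne hr]
  | succ p ih =>
    intro g hg hI
    have L := H.L
    set P : Fin n := ⟨p, by omega⟩ with hP
    set P' : Fin (n + 1) := P.castSucc with hP'
    have hPv : (P' : ℕ) = p := rfl
    have hrow := row_step H ha P hg hI
    have hd : V O ϖ 1 ((g : Matrix (Fin (n + 1)) (Fin (n + 1)) F) P' P' - eA a P') := by
      have := hrow P' Fin.castSucc_lt_succ
      rw [if_pos rfl] at this
      convert this using 1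
      rw [hPv]; simp [hP]
    have hl : ∀ c, c < P' →
        V O ϖ ((P' : ℤ) - c + 1) ((g : Matrix (Fin (n + 1)) (Fin (n + 1)) F) P' c) := by
      intro c hc
      have := hrow c (hc.trans Fin.castSucc_lt_succ)
      rw [if_neg hc.ne, sub_zero] at this
      convert this using 1
      rw [hPv]; simp [hP]; ring
    have he := eA_unit (a := a) ha P'
    obtain ⟨-, -, hu3⟩ := L.unit_congr he.1 he.2.1 he.2.2 hd
    obtain ⟨E, hEU, hE, hEm⟩ := exists_col P' (fun r =>
      - ((g : Matrix (Fin (n + 1)) (Fin (n + 1)) F) r P' *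
        ((g : Matrix (Fin (n + 1)) (Fin (n + 1)) F) P' P')⁻¹))
    have hge : ∀ r : Fin (n + 1), p ≤ (r : ℕ) → ¬ r < P' := by
      intro r hr h
      have : (r : ℕ) < P' := h
      omega
    obtain ⟨hI1, hI2, hI3⟩ := hI
    have hI' : Inv O ϖ a p (E * g) := by
      refine ⟨?_, ?_, ?_⟩
      · intro r c hc hrc
        rw [Units.val_mul, hEm]
        by_cases hcp : c = P'
        · subst hcp
          rw [if_pos hrc]
          field_simp; ring
        · have hcv : (c : ℕ) ≠ P' := fun h => hcp (Fin.ext h)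
          rw [hI1 r c (by omega) hrc, hI1 P' c (by omega) (by show (P' : ℕ) < c; omega)]
          simp
      · intro r hr
        rw [Units.val_mul, hEm, if_neg (hge r hr), add_zero]
        by_cases hrp : r = P'
        · subst hrp; exact hd
        · have hcv : (r : ℕ) ≠ P' := fun h => hrp (Fin.ext h)
          exact hI2 r (by omega)
      · intro r c hr hcr
        rw [Units.val_mul, hEm, if_neg (hge r hr), add_zero]
        by_cases hrp : r = P'
        · subst hrp; exact hl c hcr
        · have hcv : (r : ℕ) ≠ P' := fun h => hrp (Fin.ext h)
          exact hI3 r c (by omega) hcr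
    obtain ⟨u, hu1, hu2, hu3⟩ := ih (by omega) (E * g) (by
      rw [fA_left H a hEU]; exact mul_ne_zero (L.psi_ne _) hg) hI'
    refine ⟨u * E, hu1.mul hEU, ?_, by rwa [mul_assoc]⟩
    intro r hr
    rw [Units.val_mul, Matrix.mul_apply]
    refine Finset.sum_eq_zero fun l _ => ?_
    by_cases hlr : l = Fin.last n
    · rw [hlr, hu2 r hr, zero_mul]
    · rw [hE, Matrix.one_apply_ne hlr, if_neg, add_zero, mul_zero]
      rintro ⟨-, h⟩
      exact (Fin.castSucc_lt_last P).ne h.symm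

end support

section sums
variable {O : Subring F} {ϖ : F} {ℓ : ℕ} {ψ : F → ℂ} {n : ℕ} {W : GL (Fin (n + 1)) F → ℂ}
  {S : Finset (GL (Fin (n + 1)) F)} {a : Fin n → F}

theorem exists_diag (ha : UnitA O a) : ∃ D : GL (Fin (n + 1)) F, InGLO O D ∧
    (D : Matrix (Fin (n + 1)) (Fin (n + 1)) F) = Matrix.diagonal (eA a) := by
  have he := eA_unit (a := a) ha
  have hd : (Matrix.diagonal (eA a)).det ≠ 0 := by
    rw [Matrix.det_diagonal]; exact Finset.prod_ne_zero_iff.2 fun i _ => (he i).2.2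
  refine ⟨Matrix.GeneralLinearGroup.mkOfDetNeZero _ hd, inGLO_of_det _ ?_ ?_, rfl⟩
  · intro i j
    change Matrix.diagonal (eA a) i j ∈ O
    rw [Matrix.diagonal_apply]
    split_ifs
    · exact (he i).1
    · exact O.zero_mem
  · change (Matrix.diagonal (eA a)).det⁻¹ ∈ O
    rw [Matrix.det_diagonal, ← Finset.prod_inv_distrib]
    exact O.prod_mem fun i _ => (he i).2.1

theorem fA_diag (H : Wh O ϖ ℓ ψ n W S) (ha : UnitA O a) {D : GL (Fin (n + 1)) F}
    (hDO : InGLO O D)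
    (hD : (D : Matrix (Fin (n + 1)) (Fin (n + 1)) F) = Matrix.diagonal (eA a)) :
    fA ψ W S a D = S.card * W 1 := by
  have L := H.L
  have he := eA_unit (a := a) ha
  unfold fA
  rw [← nsmul_eq_mul, ← Finset.sum_const]
  refine Finset.sum_congr rfl fun η hη => ?_
  have hU := ((inConjN_iff L).1 (H.hSmem η hη)).1
  obtain ⟨u, hu, huU⟩ := exists_UT (Matrix.of fun i j => eA a i *
    (η : Matrix (Fin (n + 1)) (Fin (n + 1)) F) i j * (eA a j)⁻¹)
    (by intro i; rw [Matrix.of_apply, hU.2, mul_one, mul_inv_cancel₀ (he i).2.2])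
    (by intro i j h; rw [Matrix.of_apply, hU.1 i j h]; simp)
  have e : D * η = u * D := by
    apply Units.ext
    rw [Units.val_mul, Units.val_mul, hu, hD]
    ext i j
    rw [Matrix.diagonal_mul, Matrix.mul_diagonal, Matrix.of_apply, mul_assoc, inv_mul_cancel₀ (he j).2.2,
      mul_one]
  rw [e, H.hWleft u D huU]
  have h1 : W D = W 1 := by
    have := H.hWright 1 D hDO
    rwa [one_mul] at this
  rw [h1, ← mul_assoc, psiA, ← L.hψadd, ← Finset.sum_add_distrib, Finset.sum_eq_zero, L.psi_zero,
    one_mul]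
  intro i _
  rw [hu, Matrix.of_apply, eA_castSucc]
  have := (he i.succ).2.2
  field_simp
  ring

/-- Representatives of the units modulo `ϖ`. -/
theorem exists_units (L : Loc O ϖ ℓ ψ) : ∃ T : Finset F,
    (∀ r ∈ T, r ∈ O ∧ r⁻¹ ∈ O ∧ r ≠ 0) ∧
    (∀ y ∈ O, y⁻¹ ∈ O → y ≠ 0 → ∃! r, r ∈ T ∧ V O ϖ 1 (y - r)) ∧
    ∀ x, V O ϖ (-1) x → (x ∈ O → ∑ r ∈ T, ψ (r * x) = ℓ - 1) ∧
      (x ∉ O → ∑ r ∈ T, ψ (r * x) = -1) := by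
  classical
  obtain ⟨T, hTO, hTc, hT⟩ := L.hres 1
  have hv : ∀ z : F, (∃ d ∈ O, z = ϖ ^ 1 * d) ↔ V O ϖ 1 z := fun z => (L.v_nat (k := 1)).symm
  simp only [hv] at hT
  rw [pow_one] at hTc
  have hTO' : ∀ r ∈ T, r ∈ O := fun r hr => hTO hr
  obtain ⟨r0, ⟨hr0, hr0V⟩, hr0u⟩ := hT 0 O.zero_mem
  have hr0V' : V O ϖ 1 r0 := by simpa using hr0V.neg
  have hnv : ∀ r ∈ T.erase r0, ¬ V O ϖ 1 r := by
    intro r hr h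
    exact (Finset.mem_erase.1 hr).1 (hr0u r ⟨(Finset.mem_erase.1 hr).2, by simpa using h.neg⟩)
  refine ⟨T.erase r0, ?_, ?_, ?_⟩
  · intro r hr
    have h1 := hTO' r (Finset.mem_of_mem_erase hr)
    obtain ⟨h2, h3⟩ := L.unit_of h1 (hnv r hr)
    exact ⟨h1, h3, h2⟩
  · intro y hy hy' hy0
    obtain ⟨r, ⟨h1, h2⟩, h3⟩ := hT y hy
    refine ⟨r, ⟨Finset.mem_erase.2 ⟨?_, h1⟩, h2⟩, fun s hs =>
      h3 s ⟨Finset.mem_of_mem_erase hs.1, hs.2⟩⟩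
    rintro rfl
    have := h2.add hr0V'
    rw [sub_add_cancel] at this
    apply L.not_v
    have := L.vmulO this hy'
    rwa [mul_inv_cancel₀ hy0] at this
  · intro x hx
    have h0 : ψ (r0 * x) = 1 := by
      apply L.hψO
      exact L.vO (L.vmul hr0V' hx) (by norm_num)
    have hsplit : ∑ r ∈ T.erase r0, ψ (r * x) = ∑ r ∈ T, ψ (r * x) - 1 := by
      rw [← Finset.add_sum_erase T _ hr0, h0]; ring
    rw [hsplit]
    refine ⟨fun hxO => ?_, fun hxO => ?_⟩
    · rw [Finset.sum_congr rfl (fun r hr => L.hψO _ (O.mul_mem (hTO' r hr) hxO))]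
      simp [hTc]
    · have : ∑ r ∈ T, ψ (r * x) = 0 := by
        obtain ⟨c, hc, hc1⟩ : ∃ c ∈ O, ψ (c * x) ≠ 1 := by
          by_contra hcon
          push Not at hcon
          apply hxO
          rw [← V_zero_iff (ϖ := ϖ)]
          apply L.psi_cond
          intro c hc
          rw [mul_comm]
          exact hcon c (by rwa [neg_zero, V_zero_iff] at hc)
        have key : ∀ r : F, ∃ s, r ∈ T → s ∈ T ∧ V O ϖ 1 (r + c - s) := by
          intro r
          by_cases hr : r ∈ T
          · obtain ⟨s, hs, -⟩ := hT (r + c) (O.add_mem (hTO' r hr) hc)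
            exact ⟨s, fun _ => hs⟩
          · exact ⟨0, fun h => absurd h hr⟩
        choose s hs using key
        have hinj : Set.InjOn s T := by
          intro r hr r' hr' h
          have h1 := (hs r hr).2
          have h2 := (hs r' hr').2
          rw [← h] at h2
          have h3 := h1.sub h2
          refine (hT r (hTO' r hr)).unique ⟨hr, by simp [V_zero]⟩ ⟨hr', ?_⟩
          convert h3 using 1; ring
        have himg : T.image s = T := by
          apply Finset.eq_of_subset_of_card_le
          · intro y hy
            obtain ⟨r, hr, rfl⟩ := Finset.mem_image.1 hy
            exact (hs r hr).1
          · rw [Finset.card_image_of_injOn hinj]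
        have e : ψ (c * x) * ∑ r ∈ T, ψ (r * x) = ∑ r ∈ T, ψ (r * x) := by
          conv_rhs => rw [← himg, Finset.sum_image hinj]
          rw [Finset.mul_sum]
          refine Finset.sum_congr rfl fun r hr => ?_
          rw [← L.hψadd]
          apply L.psi_cong
          have := L.vO (L.vmul (hs r hr).2 hx) (by norm_num)
          convert this using 1; ring
        have : (ψ (c * x) - 1) * ∑ r ∈ T, ψ (r * x) = 0 := by rw [sub_mul, e]; ring
        exact (mul_eq_zero.1 this).resolve_left (sub_ne_zero.2 hc1)
      rw [this]; ring

theorem sInt_expand (L : Loc O ϖ ℓ ψ) {T : Finset F}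
    (hT : ∀ x, V O ϖ (-1) x → (x ∈ O → ∑ r ∈ T, ψ (r * x) = ℓ - 1) ∧
      (x ∉ O → ∑ r ∈ T, ψ (r * x) = -1)) {η : GL (Fin (n + 1)) F} (hη : InConjN O ϖ η) :
    (1 - (ℓ : ℂ)) ^ (sInt O η)
      = (-1) ^ n * ∑ a ∈ Fintype.piFinset (fun _ : Fin n => T), psiA ψ a η := by
  classical
  have h1 : ∀ a : Fin n → F, psiA ψ a η = ∏ i : Fin n,
      ψ (a i * (η : Matrix (Fin (n + 1)) (Fin (n + 1)) F) i.castSucc i.succ) := fun a => L.psi_sum _ _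
  simp only [h1]
  rw [← Finset.prod_univ_sum (fun _ : Fin n => T)
    (fun i r => ψ (r * (η : Matrix (Fin (n + 1)) (Fin (n + 1)) F) i.castSucc i.succ))]
  have h2 : (1 - (ℓ : ℂ)) ^ (sInt O η) = ∏ i : Fin n,
      if (η : Matrix (Fin (n + 1)) (Fin (n + 1)) F) i.castSucc i.succ ∈ O then (1 - (ℓ : ℂ)) else 1 := by
    rw [Finset.prod_ite, Finset.prod_const, Finset.prod_const_one, mul_one, sInt,
      Nat.card_eq_fintype_card, Fintype.card_subtype]
  have h3 : (-1 : ℂ) ^ n = ∏ _i : Fin n, (-1 : ℂ) := by simp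
  rw [h2, h3, ← Finset.prod_mul_distrib]
  refine Finset.prod_congr rfl fun i _ => ?_
  have hv : V O ϖ (-1) ((η : Matrix (Fin (n + 1)) (Fin (n + 1)) F) i.castSucc i.succ) := by
    have := L.v_negnat.2 (hη.2.2 i.castSucc i.succ Fin.castSucc_lt_succ)
    simpa using this
  split_ifs with h
  · rw [(hT _ hv).1 h]; ring
  · rw [(hT _ hv).2 h]; ring

end sums

section card
variable {O : Subring F} {ϖ : F} {ℓ : ℕ} {ψ : F → ℂ}

theorem transversal_unique {m : ℕ} {B : Fin m → Fin m → Set F}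
    (hB : ∀ i j, i < j → ∀ x ∈ B i j, ∀ y ∈ B i j, x - y ∈ O → x = y)
    {ρ σ ν : GL (Fin m) F} (hσU : UT σ) (hν : InNO O ν)
    (hρB : ∀ i j, i < j → (ρ : Matrix (Fin m) (Fin m) F) i j ∈ B i j)
    (hσB : ∀ i j, i < j → (σ : Matrix (Fin m) (Fin m) F) i j ∈ B i j)
    (h : ρ = σ * ν) : ρ = σ := by
  obtain ⟨hν1, hν2, hν3⟩ := hν
  have key : ∀ d : ℕ, ∀ i j : Fin m, i < j → (j : ℕ) - i ≤ d →
      (ν : Matrix (Fin m) (Fin m) F) i j = 0 := by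
    intro d
    induction d with
    | zero =>
      intro i j hij hd
      have : (i : ℕ) < j := hij
      omega
    | succ d ih =>
      intro i j hij hd
      have e : (ρ : Matrix (Fin m) (Fin m) F) i j = (σ : Matrix (Fin m) (Fin m) F) i j
          + (ν : Matrix (Fin m) (Fin m) F) i j := by
        rw [h, Units.val_mul, Matrix.mul_apply, ← Finset.add_sum_erase _ _ (Finset.mem_univ j),
          hν1, mul_one]
        congr 1
        rw [Finset.sum_eq_single i]
        · rw [hσU.2, one_mul]
        · intro l hl hli
          have hlj := (Finset.mem_erase.1 hl).1
          rcases lt_or_gt_of_ne hli with h1 | h1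
          · rw [hσU.1 _ _ h1, zero_mul]
          · rcases lt_or_gt_of_ne hlj with h2 | h2
            · rw [ih l j h2, mul_zero]
              have : (i : ℕ) < l := h1
              omega
            · rw [hν2 _ _ h2, mul_zero]
        · intro hi
          exact absurd (Finset.mem_erase.2 ⟨hij.ne, Finset.mem_univ _⟩) hi
      have := hB i j hij _ (hρB i j hij) _ (hσB i j hij)
        (by rw [e, add_sub_cancel_left]; exact hν3 i j hij)
      rw [this] at e
      simpa using e
  have : ν = 1 := by
    apply Units.ext
    ext i j
    rw [Units.val_one]
    rcases lt_trichotomy i j with h1 | h1 | h1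
    · rw [key m i j h1 (by omega), Matrix.one_apply_ne h1.ne]
    · rw [h1, hν1, Matrix.one_apply_eq]
    · rw [hν2 _ _ h1, Matrix.one_apply_ne h1.ne']
  rw [h, this, mul_one]

theorem transversal_exists (L : Loc O ϖ ℓ ψ) {m : ℕ} {B : Fin m → Fin m → Set F}
    (hB : ∀ i j : Fin m, i < j → ∀ x, V O ϖ ((i : ℤ) - j) x → ∃ y ∈ B i j, y - x ∈ O)
    {η : GL (Fin m) F} (hη : InConjN O ϖ η) (d : ℕ) :
    ∃ ν : GL (Fin m) F, InNO O ν ∧ ∀ i j : Fin m, i < j → (j : ℕ) - i ≤ d →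
      ((η * ν : GL (Fin m) F) : Matrix (Fin m) (Fin m) F) i j ∈ B i j := by
  classical
  induction d with
  | zero =>
    refine ⟨1, inNO_iff.2 ⟨UT.one, ?_⟩, ?_⟩
    · constructor <;> intro i j
      · rw [Units.val_one, Matrix.one_apply]; split_ifs
        exacts [O.one_mem, O.zero_mem]
      · rw [inv_one, Units.val_one, Matrix.one_apply]; split_ifs
        exacts [O.one_mem, O.zero_mem]
    · intro i j hij hd
      have : (i : ℕ) < j := hij
      omega
  | succ d ih =>
    obtain ⟨ν, hν, hd⟩ := ih
    have hJ : InJ O ϖ (η * ν) := ((inConjN_iff L).1 hη).2.mul L (NO_inJ L hν)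
    have hU : UT (η * ν) := ((inConjN_iff L).1 hη).1.mul (inNO_iff.1 hν).1
    have key : ∀ i j : Fin m, ∃ c : F, c ∈ O ∧ (i < j →
        ((η * ν : GL (Fin m) F) : Matrix (Fin m) (Fin m) F) i j + c ∈ B i j) := by
      intro i j
      by_cases hij : i < j
      · have h1 := hJ i j
        rw [Matrix.one_apply_ne hij.ne, sub_zero, lev, if_neg (not_le.2 hij), add_zero] at h1
        obtain ⟨y, hy, hyO⟩ := hB i j hij _ h1
        exact ⟨_, hyO, fun _ => by rwa [add_sub_cancel]⟩
      · exact ⟨0, O.zero_mem, fun h => absurd h hij⟩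
    choose c hcO hc using key
    obtain ⟨μ, hμ, hμU⟩ := exists_UT ((1 : Matrix (Fin m) (Fin m) F) +
      Matrix.of fun i j : Fin m => if (j : ℕ) = i + (d + 1) then c i j else 0)
      (by intro i; simp) (by
        intro i j h
        have h' : (j : ℕ) < i := h
        rw [Matrix.add_apply, Matrix.one_apply_ne h.ne', Matrix.of_apply, if_neg (by omega),
          add_zero])
    refine ⟨ν * μ, inNO_iff.2 ⟨(inNO_iff.1 hν).1.mul hμU, (inNO_iff.1 hν).2.mul
      (inGLO_of_det μ ?_ (by rw [hμU.det]; simp [O.one_mem]))⟩, ?_⟩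
    · intro i j
      rw [hμ, Matrix.add_apply, Matrix.of_apply]
      apply O.add_mem
      · rw [Matrix.one_apply]; split_ifs
        exacts [O.one_mem, O.zero_mem]
      · split_ifs
        exacts [hcO i j, O.zero_mem]
    · intro i j hij hdij
      have hij' : (i : ℕ) < j := hij
      rw [← mul_assoc, Units.val_mul, hμ, mul_add, mul_one, Matrix.add_apply, Matrix.mul_apply]
      by_cases hd' : (j : ℕ) - i ≤ d
      · rw [Finset.sum_eq_zero, add_zero]
        · exact hd i j hij hd'
        · intro l _
          rw [Matrix.of_apply]
          split_ifs with h
          · rw [hU.1 i l (by show (l : ℕ) < i; omega), zero_mul]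
          · rw [mul_zero]
      · rw [Finset.sum_eq_single i]
        · rw [hU.2, one_mul, Matrix.of_apply, if_pos (by omega)]
          exact hc i j hij
        · intro l _ hl
          rw [Matrix.of_apply, if_neg, mul_zero]
          intro h
          apply hl; apply Fin.ext; omega
        · simp

theorem sum_levels (n : ℕ) :
    ∑ i : Fin (n + 1), ∑ j : Fin (n + 1), ((j : ℕ) - (i : ℕ)) = n * (n + 1) * (n + 2) / 6 := by
  have h6 : 6 * ∑ i : Fin (n + 1), ∑ j : Fin (n + 1), ((j : ℕ) - (i : ℕ))
      = n * (n + 1) * (n + 2) := by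
    induction n with
    | zero => simp
    | succ n ih =>
      rw [Fin.sum_univ_castSucc]
      have h1 : ∀ i : Fin (n + 1), ∑ j : Fin (n + 1 + 1), ((j : ℕ) - ((i.castSucc : Fin (n+2)) : ℕ))
          = (∑ j : Fin (n + 1), ((j : ℕ) - (i : ℕ))) + (n + 1 - i) := by
        intro i; rw [Fin.sum_univ_castSucc]; simp
      simp only [h1]
      rw [Finset.sum_add_distrib]
      have h2 : ∑ j : Fin (n + 1 + 1), ((j : ℕ) - ((Fin.last (n + 1) : Fin (n+2)) : ℕ)) = 0 := by
        apply Finset.sum_eq_zero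
        intro j _
        have := j.2
        simp; omega
      have h3 : 2 * ∑ i : Fin (n + 1), (n + 1 - (i : ℕ)) = (n + 1) * (n + 2) := by
        clear ih h1 h2
        induction n with
        | zero => simp
        | succ n ih =>
          rw [Fin.sum_univ_succ]
          simp only [Fin.val_zero, Fin.val_succ, Nat.sub_zero, Nat.add_sub_add_right]
          rw [mul_add, ih]; ring
      rw [h2, add_zero, mul_add, ih]
      nlinarith [h3]
  rw [← h6]; simp

theorem card_S (L : Loc O ϖ ℓ ψ) {n : ℕ} {S : Finset (GL (Fin (n + 1)) F)}
    (hSmem : ∀ η ∈ S, InConjN O ϖ η)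
    (hSrep : ∀ η : GL (Fin (n + 1)) F, InConjN O ϖ η →
      ∃! ρ, ρ ∈ S ∧ ∃ ν : GL (Fin (n + 1)) F, InNO O ν ∧ η = ρ * ν) :
    S.card = ℓ ^ (n * (n + 1) * (n + 2) / 6) := by
  classical
  choose T hTO hTc hT using L.hres
  -- entries
  set B : Fin (n + 1) → Fin (n + 1) → Finset F := fun i j =>
    if i < j then (T ((j : ℕ) - i)).image (fun r => (ϖ ^ ((j : ℕ) - i))⁻¹ * r)
    else {(1 : Matrix (Fin (n + 1)) (Fin (n + 1)) F) i j} with hBdef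
  have hBlt : ∀ i j, i < j → B i j = (T ((j : ℕ) - i)).image (fun r => (ϖ ^ ((j : ℕ) - i))⁻¹ * r) :=
    fun i j h => if_pos h
  have hBge : ∀ i j, ¬ i < j → B i j = {(1 : Matrix (Fin (n + 1)) (Fin (n + 1)) F) i j} :=
    fun i j h => if_neg h
  have hBcard : ∀ i j, (B i j).card = ℓ ^ ((j : ℕ) - i) := by
    intro i j
    by_cases h : i < j
    · rw [hBlt i j h, Finset.card_image_of_injective, hTc]
      exact mul_right_injective₀ (inv_ne_zero (pow_ne_zero _ L.hϖ0))
    · rw [hBge i j h, Finset.card_singleton]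
      have : ¬ (i : ℕ) < j := h
      rw [Nat.sub_eq_zero_of_le (by omega), pow_zero]
  have hBV : ∀ i j, i < j → ∀ x ∈ B i j, ϖ ^ ((j : ℕ) - (i : ℕ)) * x ∈ O := by
    intro i j h x hx
    rw [hBlt i j h] at hx
    obtain ⟨r, hr, rfl⟩ := Finset.mem_image.1 hx
    rw [mul_inv_cancel_left₀ (pow_ne_zero _ L.hϖ0)]
    exact hTO _ hr
  have hB1 : ∀ i j, i < j → ∀ x ∈ (B i j : Set F), ∀ y ∈ (B i j : Set F), x - y ∈ O → x = y := by
    intro i j h x hx y hy hxy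
    rw [Finset.mem_coe, hBlt i j h] at hx hy
    obtain ⟨r, hr, rfl⟩ := Finset.mem_image.1 hx
    obtain ⟨s, hs, rfl⟩ := Finset.mem_image.1 hy
    have h1 := (hT ((j : ℕ) - i) r (hTO _ hr)).unique ⟨hr, 0, O.zero_mem, by simp⟩
      ⟨hs, _, hxy, by rw [← mul_sub, mul_inv_cancel_left₀ (pow_ne_zero _ L.hϖ0)]⟩
    rw [h1]
  have hB2 : ∀ i j : Fin (n + 1), i < j → ∀ x, V O ϖ ((i : ℤ) - j) x → ∃ y ∈ (B i j : Set F), y - x ∈ O := by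
    intro i j h x hx
    have h' : (i : ℕ) < j := h
    have hx' : ϖ ^ ((j : ℕ) - i) * x ∈ O := by
      apply L.v_negnat.1
      convert hx using 1
      omega
    obtain ⟨r, ⟨hr, d, hd, hrd⟩, -⟩ := hT ((j : ℕ) - i) _ hx'
    refine ⟨(ϖ ^ ((j : ℕ) - i))⁻¹ * r, ?_, ?_⟩
    · rw [Finset.mem_coe, hBlt i j h]; exact Finset.mem_image_of_mem _ hr
    · have hp := pow_ne_zero ((j : ℕ) - i) L.hϖ0
      have : (ϖ ^ ((j : ℕ) - i))⁻¹ * r - x = - d := by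
        have : r = ϖ ^ ((j : ℕ) - i) * x - ϖ ^ ((j : ℕ) - i) * d := by rw [← hrd]; ring
        rw [this]; field_simp; ring
      rw [this]; exact O.neg_mem hd
  set R : Finset (Fin (n + 1) → Fin (n + 1) → F) :=
    Fintype.piFinset fun i => Fintype.piFinset fun j => B i j with hR
  have hRcard : R.card = ℓ ^ (n * (n + 1) * (n + 2) / 6) := by
    rw [hR, Fintype.card_piFinset]
    simp only [Fintype.card_piFinset, hBcard, Finset.prod_pow_eq_pow_sum]
    rw [sum_levels]
  have hRmem : ∀ M : Fin (n + 1) → Fin (n + 1) → F, M ∈ R ↔ ∀ i j, M i j ∈ B i j := by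
    intro M; rw [hR]; simp [Fintype.mem_piFinset]
  rw [← hRcard]
  have hNOinv : ∀ {ν : GL (Fin (n + 1)) F}, InNO O ν → InNO O ν⁻¹ := fun h =>
    inNO_iff.2 ⟨(inNO_iff.1 h).1.inv, (inNO_iff.1 h).2.inv⟩
  have hNOmul : ∀ {ν μ : GL (Fin (n + 1)) F}, InNO O ν → InNO O μ → InNO O (ν * μ) := fun h h' =>
    inNO_iff.2 ⟨(inNO_iff.1 h).1.mul (inNO_iff.1 h').1, (inNO_iff.1 h).2.mul (inNO_iff.1 h').2⟩
  have h1N : InNO O (1 : GL (Fin (n+1)) F) := by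
    refine ⟨fun i => by simp, fun i j h => ?_, fun i j h => ?_⟩
    · rw [Units.val_one, Matrix.one_apply_ne h.ne']
    · rw [Units.val_one, Matrix.one_apply_ne h.ne]; exact O.zero_mem
  apply le_antisymm
  · -- S to R
    have key : ∀ η : GL (Fin (n + 1)) F, ∃ ν : GL (Fin (n + 1)) F, η ∈ S → InNO O ν ∧
        ((η * ν : GL (Fin (n + 1)) F) : Matrix (Fin (n + 1)) (Fin (n + 1)) F) ∈ R := by
      intro η
      by_cases hη : η ∈ S
      · obtain ⟨ν, hν, h⟩ := transversal_exists L hB2 (hSmem η hη) (n + 1)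
        refine ⟨ν, fun _ => ⟨hν, (hRmem _).2 fun i j => ?_⟩⟩
        by_cases hij : i < j
        · exact h i j hij (by omega)
        · have hU := ((inConjN_iff L).1 (hSmem η hη)).1.mul (inNO_iff.1 hν).1
          rw [hBge i j hij, Finset.mem_singleton]
          rcases eq_or_lt_of_le (not_lt.1 hij) with e | e
          · rw [e, hU.2, Matrix.one_apply_eq]
          · rw [hU.1 _ _ e, Matrix.one_apply_ne e.ne']
      · exact ⟨1, fun h => absurd h hη⟩
    choose ν hν using key
    refine Finset.card_le_card_of_injOn
      (fun η => ((η * ν η : GL (Fin (n + 1)) F) : Matrix (Fin (n + 1)) (Fin (n + 1)) F))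
      (fun η hη => (hν η hη).2) ?_
    intro x hx y hy hxy
    have hxy' : x * ν x = y * ν y := Units.ext hxy
    refine (hSrep x (hSmem x hx)).unique ⟨hx, 1, h1N, by simp⟩ ⟨hy, ν y * (ν x)⁻¹,
      hNOmul (hν y hy).1 (hNOinv (hν x hx).1), ?_⟩
    rw [← mul_assoc, ← hxy', mul_inv_cancel_right]
  · have key : ∀ M : Fin (n + 1) → Fin (n + 1) → F, ∃ σ : GL (Fin (n + 1)) F, M ∈ R → σ ∈ S ∧
        ∃ ρ ν : GL (Fin (n + 1)) F, (ρ : Matrix (Fin (n + 1)) (Fin (n + 1)) F) = M ∧ UT ρ ∧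
          InNO O ν ∧ ρ = σ * ν := by
      intro M
      by_cases hM : M ∈ R
      · have hM' := (hRmem M).1 hM
        obtain ⟨ρ, hρ, hρU⟩ := exists_UT (Matrix.of M)
          (by
            intro i
            have := hM' i i
            rw [hBge i i (lt_irrefl i), Finset.mem_singleton, Matrix.one_apply_eq] at this
            exact this)
          (by
            intro i j h
            have := hM' i j
            rw [hBge i j (not_lt.2 h.le), Finset.mem_singleton, Matrix.one_apply_ne h.ne'] at this
            exact this)
        have hρX : InConjN O ϖ ρ := ⟨hρU.2, hρU.1, fun i j h => by
          rw [hρ]; exact hBV i j h _ (hM' i j)⟩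
        obtain ⟨σ, ⟨hσ, ν, hν, e⟩, -⟩ := hSrep ρ hρX
        exact ⟨σ, fun _ => ⟨hσ, ρ, ν, hρ, hρU, hν, e⟩⟩
      · exact ⟨1, fun h => absurd h hM⟩
    choose σ hσ using key
    refine Finset.card_le_card_of_injOn σ (fun M hM => (hσ M hM).1) ?_
    intro M hM N hN hMN
    obtain ⟨-, ρ, ν, h1, h2, h3, h4⟩ := hσ M hM
    obtain ⟨-, ρ', ν', h1', h2', h3', h4'⟩ := hσ N hN
    have e : ρ = ρ' * (ν'⁻¹ * ν) := by rw [h4, h4', hMN]; group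
    have := transversal_unique (B := fun i j => (B i j : Set F)) hB1 h2' (hNOmul (hNOinv h3') h3)
      (fun i j _ => by rw [h1]; exact (hRmem M).1 hM i j)
      (fun i j _ => by rw [h1']; exact (hRmem N).1 hN i j) e
    have h5 : (ρ : Matrix (Fin (n + 1)) (Fin (n + 1)) F) = ρ' := by rw [this]
    rw [h1, h1'] at h5
    exact h5

end card

section final
variable {O : Subring F} {ϖ : F} {ℓ : ℕ} {ψ : F → ℂ} {n : ℕ} {W : GL (Fin (n + 1)) F → ℂ}
  {S : Finset (GL (Fin (n + 1)) F)} {a : Fin n → F}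

theorem det_mem {m : ℕ} {M : Matrix (Fin m) (Fin m) F} (h : ∀ i j, M i j ∈ O) : M.det ∈ O := by
  rw [Matrix.det_apply]
  refine O.sum_mem fun σ _ => ?_
  rw [Units.smul_def, zsmul_eq_mul]
  exact O.mul_mem (intCast_mem O _) (O.prod_mem fun l _ => h _ _)

/-- The diagonal entries of an integral matrix, upper triangular modulo `ϖ`, are units. -/
theorem diag_units (L : Loc O ϖ ℓ ψ) {m : ℕ} {g : GL (Fin m) F} (hg : InGLO O g)
    (hc : ∀ i j, j < i → V O ϖ 1 ((g : Matrix (Fin m) (Fin m) F) i j)) (i : Fin m) :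
    ¬ V O ϖ 1 ((g : Matrix (Fin m) (Fin m) F) i i) := by
  intro hi
  set pi : O := ⟨ϖ, L.hϖO⟩ with hpi
  set I : Ideal O := Ideal.span {pi} with hI
  have hmem : ∀ x : O, V O ϖ 1 (x : F) → Ideal.Quotient.mk I x = 0 := by
    intro x hx
    rw [Ideal.Quotient.eq_zero_iff_mem, hI, Ideal.mem_span_singleton]
    obtain ⟨d, hd, e⟩ := (L.v_nat (k := 1)).1 hx
    refine ⟨⟨d, hd⟩, Subtype.ext ?_⟩
    simpa using e
  set M : Matrix (Fin m) (Fin m) O := Matrix.of fun i j =>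
    ⟨(g : Matrix (Fin m) (Fin m) F) i j, hg.1 i j⟩ with hM
  set N : Matrix (Fin m) (Fin m) O := Matrix.of fun i j =>
    ⟨((g⁻¹ : GL (Fin m) F) : Matrix (Fin m) (Fin m) F) i j, hg.2 i j⟩ with hN
  have hMN : M * N = 1 := by
    have h1 : (g : Matrix (Fin m) (Fin m) F) * ((g⁻¹ : GL (Fin m) F) : Matrix (Fin m) (Fin m) F)
        = 1 := by rw [← Units.val_mul, mul_inv_cancel, Units.val_one]
    ext r c
    have h2 := congrFun (congrFun h1 r) c
    rw [Matrix.mul_apply] at h2 ⊢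
    rw [AddSubmonoidClass.coe_finsetSum]
    rw [show (((1 : Matrix (Fin m) (Fin m) O) r c : O) : F)
      = (1 : Matrix (Fin m) (Fin m) F) r c by rw [Matrix.one_apply, Matrix.one_apply]; split_ifs <;> rfl]
    rw [← h2]
    rfl
  have hdet : M.det * N.det = 1 := by rw [← Matrix.det_mul, hMN, Matrix.det_one]
  have h3 : (Ideal.Quotient.mk I) M.det = 0 := by
    rw [RingHom.map_det, Matrix.det_of_isUpperTriangular]
    · apply Finset.prod_eq_zero (Finset.mem_univ i)
      exact hmem (M i i) hi
    · intro r c h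
      exact hmem (M r c) (hc r c h)
  have h4 : (Ideal.Quotient.mk I) 1 = 0 := by rw [← hdet, map_mul, h3, zero_mul]
  rw [Ideal.Quotient.eq_zero_iff_mem, hI, Ideal.mem_span_singleton] at h4
  obtain ⟨d, hd⟩ := h4
  apply L.not_v
  refine (L.v_nat (k := 1)).2 ⟨d, d.2, ?_⟩
  have := congrArg (Subtype.val) hd
  simpa using this

theorem block_entries {h : Matrix (Fin n) (Fin n) F} {h' : Matrix (Fin (n + 1)) (Fin (n + 1)) F}
    (e : h' = Matrix.reindex finSumFinEquiv finSumFinEquiv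
      (Matrix.fromBlocks h 0 0 (1 : Matrix (Fin 1) (Fin 1) F))) :
    (∀ i j : Fin n, h' i.castSucc j.castSucc = h i j) ∧
    (∀ i : Fin n, h' i.castSucc (Fin.last n) = 0) ∧
    (∀ j : Fin n, h' (Fin.last n) j.castSucc = 0) ∧ h' (Fin.last n) (Fin.last n) = 1 ∧
    h'.det = h.det := by
  have e1 : ∀ i : Fin n, (finSumFinEquiv (m := n) (n := 1)).symm i.castSucc = Sum.inl i := by
    intro i; exact finSumFinEquiv_symm_apply_castAdd i
  have e2 : (finSumFinEquiv (m := n) (n := 1)).symm (Fin.last n) = Sum.inr 0 :=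
    finSumFinEquiv_symm_last
  subst e
  refine ⟨?_, ?_, ?_, ?_, ?_⟩
  · intro i j
    rw [Matrix.reindex_apply, Matrix.submatrix_apply, e1, e1]; rfl
  · intro i
    rw [Matrix.reindex_apply, Matrix.submatrix_apply, e1, e2]; rfl
  · intro i
    rw [Matrix.reindex_apply, Matrix.submatrix_apply, e1, e2]; rfl
  · rw [Matrix.reindex_apply, Matrix.submatrix_apply, e2]; rfl
  · rw [Matrix.det_reindex_self, Matrix.det_fromBlocks_zero₂₁, Matrix.det_one, mul_one]

theorem Wtilde_expand (H : Wh O ϖ ℓ ψ n W S) {T : Finset F}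
    (hT : ∀ x, V O ϖ (-1) x → (x ∈ O → ∑ r ∈ T, ψ (r * x) = ℓ - 1) ∧
      (x ∉ O → ∑ r ∈ T, ψ (r * x) = -1)) (g : GL (Fin (n + 1)) F) :
    ∑ η ∈ S, (1 - (ℓ : ℂ)) ^ (sInt O η) * W (g * η)
      = (-1) ^ n * ∑ a ∈ Fintype.piFinset (fun _ : Fin n => T), fA ψ W S a g := by
  unfold fA
  rw [Finset.sum_comm, Finset.mul_sum]
  refine Finset.sum_congr rfl fun η hη => ?_
  rw [sInt_expand H.L hT (H.hSmem η hη), mul_assoc, Finset.sum_mul]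

theorem Inv_GLO (L : Loc O ϖ ℓ ψ) (ha : UnitA O a) {g : GL (Fin (n + 1)) F}
    (hI : Inv O ϖ a 0 g) : InGLO O g := by
  have he := eA_unit (a := a) ha
  refine lower_GLO L (fun i => (he i).1) (fun i => (he i).2.1) (fun i => (he i).2.2)
    (fun i j h => hI.1 i j (Nat.zero_le _) h) (fun i => hI.2.1 i (Nat.zero_le _)) ?_
  intro i j h
  refine L.vO (hI.2.2 i j (Nat.zero_le _) h) ?_
  have : (j : ℕ) < i := h
  omega

theorem reduce_block (H : Wh O ϖ ℓ ψ n W S) (ha : UnitA O a) {h : Matrix (Fin n) (Fin n) F}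
    {h' : GL (Fin (n + 1)) F}
    (e : (h' : Matrix (Fin (n + 1)) (Fin (n + 1)) F)
      = Matrix.reindex finSumFinEquiv finSumFinEquiv
      (Matrix.fromBlocks h 0 0 (1 : Matrix (Fin 1) (Fin 1) F)))
    (hf : fA ψ W S a h' ≠ 0) :
    ∃ u : GL (Fin (n + 1)) F, UT u ∧ (∀ r, r ≠ Fin.last n →
        (u : Matrix (Fin (n + 1)) (Fin (n + 1)) F) r (Fin.last n) = 0) ∧
        Inv O ϖ a 0 (u * h') := by
  obtain ⟨b1, b2, b3, b4, -⟩ := block_entries e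
  have hlast : ∀ c : Fin (n + 1), n ≤ (c : ℕ) → c = Fin.last n := by
    intro c hc
    apply Fin.ext
    have := c.2
    simp; omega
  refine reduce H ha n le_rfl h' hf ⟨?_, ?_, ?_⟩
  · intro r c hc hrc
    obtain rfl := hlast c hc
    obtain ⟨i, rfl⟩ := Fin.exists_castSucc_eq.2 hrc.ne
    exact b2 i
  · intro r hr
    obtain rfl := hlast r hr
    rw [b4, eA_last, sub_self]; exact V_zero _
  · intro r c hr hcr
    obtain rfl := hlast r hr
    obtain ⟨i, rfl⟩ := Fin.exists_castSucc_eq.2 hcr.ne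
    rw [b3]; exact V_zero _

theorem support_part (H : Wh O ϖ ℓ ψ n W S) (ha : UnitA O a) {h : GL (Fin n) F}
    {h' : GL (Fin (n + 1)) F}
    (e : (h' : Matrix (Fin (n + 1)) (Fin (n + 1)) F)
      = Matrix.reindex finSumFinEquiv finSumFinEquiv
      (Matrix.fromBlocks (h : Matrix (Fin n) (Fin n) F) 0 0 (1 : Matrix (Fin 1) (Fin 1) F)))
    (hf : fA ψ W S a h' ≠ 0) :
    ∃ u k : GL (Fin n) F, UT u ∧ InGLO O k ∧ h = u * k := by
  obtain ⟨u, hu1, hu2, hI⟩ := reduce_block H ha e hf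
  obtain ⟨b1, b2, b3, b4, -⟩ := block_entries e
  have he := eA_unit (a := a) ha
  obtain ⟨v, hv, hvU⟩ := exists_UT (Matrix.of fun i j : Fin n =>
    (u : Matrix (Fin (n + 1)) (Fin (n + 1)) F) i.castSucc j.castSucc)
    (fun i => hu1.2 _) (fun i j hij => hu1.1 _ _ (Fin.castSucc_lt_castSucc_iff.2 hij))
  have hent : ∀ i j : Fin n, ((v * h : GL (Fin n) F) : Matrix (Fin n) (Fin n) F) i j
      = ((u * h' : GL (Fin (n + 1)) F) : Matrix (Fin (n + 1)) (Fin (n + 1)) F)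
        i.castSucc j.castSucc := by
    intro i j
    rw [Units.val_mul, Units.val_mul, Matrix.mul_apply, Matrix.mul_apply, Fin.sum_univ_castSucc,
      hu2 _ (Fin.castSucc_lt_last i).ne, zero_mul, add_zero]
    refine Finset.sum_congr rfl fun l _ => ?_
    rw [hv, b1]; rfl
  refine ⟨v⁻¹, v * h, hvU.inv, ?_, by group⟩
  have hG := Inv_GLO H.L ha hI
  refine lower_GLO H.L (e := fun i => eA a i.castSucc) (fun i => (he _).1) (fun i => (he _).2.1)
    (fun i => (he _).2.2) ?_ ?_ ?_
  · intro i j hij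
    rw [hent]; exact hI.1 _ _ (Nat.zero_le _) (Fin.castSucc_lt_castSucc_iff.2 hij)
  · intro i
    rw [hent]; exact hI.2.1 _ (Nat.zero_le _)
  · intro i j _
    rw [hent]; exact hG.1 _ _

theorem block_GLO {k : GL (Fin n) F} (hk : InGLO O k) {h' : GL (Fin (n + 1)) F}
    (e : (h' : Matrix (Fin (n + 1)) (Fin (n + 1)) F)
      = Matrix.reindex finSumFinEquiv finSumFinEquiv
      (Matrix.fromBlocks (k : Matrix (Fin n) (Fin n) F) 0 0 (1 : Matrix (Fin 1) (Fin 1) F))) :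
    InGLO O h' := by
  obtain ⟨b1, b2, b3, b4, b5⟩ := block_entries e
  apply inGLO_of_det
  · intro i j
    refine Fin.lastCases ?_ (fun i => ?_) i <;> refine Fin.lastCases ?_ (fun j => ?_) j
    · rw [b4]; exact O.one_mem
    · rw [b3]; exact O.zero_mem
    · rw [b2]; exact O.zero_mem
    · rw [b1]; exact hk.1 _ _
  · rw [b5]
    have h1 : ((k⁻¹ : GL (Fin n) F) : Matrix (Fin n) (Fin n) F).det
        = (k : Matrix (Fin n) (Fin n) F).det⁻¹ := by
      apply eq_inv_of_mul_eq_one_left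
      rw [← Matrix.det_mul, ← Units.val_mul, inv_mul_cancel, Units.val_one, Matrix.det_one]
    rw [← h1]; exact det_mem hk.2

/-- The depth condition on the strictly lower entries. -/
def Cond (O : Subring F) (ϖ : F) {m : ℕ} (g : GL (Fin m) F) : Prop :=
  ∀ i j : Fin m, j < i → V O ϖ ((i : ℤ) - j + 1) ((g : Matrix (Fin m) (Fin m) F) i j)

theorem fA_ne (H : Wh O ϖ ℓ ψ n W S) (ha : UnitA O a) {k : GL (Fin n) F} (hk : InGLO O k)
    {h' : GL (Fin (n + 1)) F}
    (e : (h' : Matrix (Fin (n + 1)) (Fin (n + 1)) F)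
      = Matrix.reindex finSumFinEquiv finSumFinEquiv
      (Matrix.fromBlocks (k : Matrix (Fin n) (Fin n) F) 0 0 (1 : Matrix (Fin 1) (Fin 1) F)))
    (hf : fA ψ W S a h' ≠ 0) :
    Cond O ϖ h' ∧
      ∀ i, V O ϖ 1 ((h' : Matrix (Fin (n + 1)) (Fin (n + 1)) F) i i - eA a i) := by
  have L := H.L
  obtain ⟨u, hu1, -, hI⟩ := reduce_block H ha e hf
  have hGO := Inv_GLO L ha hI
  have hh' := block_GLO hk e
  have huO : InGLO O u := by
    have := hGO.mul hh'.inv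
    rwa [mul_inv_cancel_right] at this
  set G := u * h' with hG
  have hhG : h' = u⁻¹ * G := by rw [hG]; group
  have hv := hu1.inv
  have hvO := huO.inv
  set v := u⁻¹ with hvdef
  have hexp : ∀ r c, (h' : Matrix (Fin (n + 1)) (Fin (n + 1)) F) r c
      = (G : Matrix (Fin (n + 1)) (Fin (n + 1)) F) r c
        + ∑ l ∈ Finset.univ.erase r, (v : Matrix (Fin (n + 1)) (Fin (n + 1)) F) r l
          * (G : Matrix (Fin (n + 1)) (Fin (n + 1)) F) l c := by
    intro r c
    conv_lhs => rw [hhG]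
    rw [Units.val_mul, Matrix.mul_apply, ← Finset.add_sum_erase _ _ (Finset.mem_univ r), hv.2,
      one_mul]
  have hrest : ∀ r c : Fin (n + 1), c ≤ r → V O ϖ ((r : ℤ) - c + 1)
      (∑ l ∈ Finset.univ.erase r, (v : Matrix (Fin (n + 1)) (Fin (n + 1)) F) r l
          * (G : Matrix (Fin (n + 1)) (Fin (n + 1)) F) l c) := by
    intro r c hcr
    refine V_sum _ _ fun l hl => ?_
    rcases lt_or_gt_of_ne (Finset.mem_erase.1 hl).1 with h1 | h1
    · rw [hv.1 _ _ h1, zero_mul]; exact V_zero _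
    · have h2 : (r : ℕ) < l := h1
      exact L.vmono (L.vOmul (hI.2.2 l c (Nat.zero_le _) (lt_of_le_of_lt hcr h1)) (hvO.1 _ _))
        (by omega)
  constructor
  · intro r c hcr
    rw [hexp]
    exact (hI.2.2 r c (Nat.zero_le _) hcr).add (hrest r c hcr.le)
  · intro r
    rw [hexp, add_sub_right_comm]
    refine (hI.2.1 r (Nat.zero_le _)).add ?_
    simpa using hrest r r le_rfl

theorem fA_value (H : Wh O ϖ ℓ ψ n W S) (ha : UnitA O a) {h' : GL (Fin (n + 1)) F}
    (hO : InGLO O h') (hC : Cond O ϖ h')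
    (hD : ∀ i, V O ϖ 1 ((h' : Matrix (Fin (n + 1)) (Fin (n + 1)) F) i i - eA a i)) :
    fA ψ W S a h' = S.card * W 1 := by
  have L := H.L
  have he := eA_unit (a := a) ha
  obtain ⟨D, hDO, hDv⟩ := exists_diag ha
  rw [← fA_diag H ha hDO hDv]
  set j := D⁻¹ * h' with hj
  have hDj : D * j = h' := by rw [hj]; group
  clear_value j
  have hent : ∀ r c, (j : Matrix (Fin (n + 1)) (Fin (n + 1)) F) r c
      = (eA a r)⁻¹ * (h' : Matrix (Fin (n + 1)) (Fin (n + 1)) F) r c := by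
    intro r c
    rw [← hDj, Units.val_mul, hDv, Matrix.diagonal_mul, inv_mul_cancel_left₀ (he r).2.2]
  have hjJ : InJ O ϖ j := by
    intro r c
    rw [hent]
    rcases lt_trichotomy r c with h | h | h
    · rw [Matrix.one_apply_ne h.ne, sub_zero]
      refine L.vmono (V_zero_iff.2 (O.mul_mem (he r).2.1 (hO.1 r c))) ?_
      unfold lev
      rw [if_neg (not_le.2 h)]
      have : (r : ℕ) < c := h
      omega
    · subst h
      have := L.vOmul (hD r) (he r).2.1
      simp only [lev, le_refl, if_true, sub_self, zero_add, Matrix.one_apply_eq]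
      convert this using 1
      have := (he r).2.2
      field_simp
    · rw [Matrix.one_apply_ne h.ne', sub_zero]
      unfold lev
      rw [if_pos h.le]
      exact L.vOmul (hC r c h) (he r).2.1
  have h1 := fA_equiv L H.hWright H.hSmem H.hSrep (fun i => (ha i).1) hjJ D
  rw [hDj, psiA_GLO L (fun i => (ha i).1), one_mul] at h1
  · exact h1
  · intro r c; rw [hent]; exact O.mul_mem (he r).2.1 (hO.1 r c)

theorem exists_a (L : Loc O ϖ ℓ ψ) {T : Finset F}
    (hT1 : ∀ r ∈ T, r ∈ O ∧ r⁻¹ ∈ O ∧ r ≠ 0)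
    (hT2 : ∀ y ∈ O, y⁻¹ ∈ O → y ≠ 0 → ∃! r, r ∈ T ∧ V O ϖ 1 (y - r))
    (c : Fin (n + 1) → F) (hc : ∀ i, c i ∈ O ∧ (c i)⁻¹ ∈ O ∧ c i ≠ 0) (hl : c (Fin.last n) = 1) :
    ∃ a0 ∈ Fintype.piFinset (fun _ : Fin n => T), (∀ i, V O ϖ 1 (c i - eA a0 i)) ∧
      ∀ a ∈ Fintype.piFinset (fun _ : Fin n => T), (∀ i, V O ϖ 1 (c i - eA a i)) → a = a0 := by
  set y : Fin n → F := fun i => - (c i.castSucc * (c i.succ)⁻¹) with hy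
  have hyu : ∀ i, y i ∈ O ∧ (y i)⁻¹ ∈ O ∧ y i ≠ 0 := by
    intro i
    have h1 := hc i.castSucc
    have h2 := hc i.succ
    refine ⟨O.neg_mem (O.mul_mem h1.1 h2.2.1), ?_, neg_ne_zero.2 (mul_ne_zero h1.2.2
      (inv_ne_zero h2.2.2))⟩
    simp only [hy]
    rw [inv_neg, mul_inv, inv_inv]
    exact O.neg_mem (O.mul_mem h1.2.1 h2.1)
  have hyc : ∀ i, c i.castSucc = - y i * c i.succ := by
    intro i
    simp only [hy]
    rw [neg_neg, inv_mul_cancel_right₀ (hc i.succ).2.2]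
  choose a0 ha0 ha0u using fun i => hT2 (y i) (hyu i).1 (hyu i).2.1 (hyu i).2.2
  refine ⟨a0, Fintype.mem_piFinset.2 fun i => (ha0 i).1, ?_, ?_⟩
  · intro i
    induction i using Fin.reverseInduction with
    | last => rw [hl, eA_last, sub_self]; exact V_zero _
    | cast i ih =>
      have h1 := L.vmulO (ha0 i).2 (hc i.succ).1
      have h2 := L.vOmul ih (hT1 _ (ha0 i).1).1
      have := (h1.add h2).neg
      convert this using 1
      rw [eA_castSucc, hyc]; ring
  · intro a ha h
    ext i
    apply ha0u i
    refine ⟨Fintype.mem_piFinset.1 ha i, ?_⟩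
    have h2 := L.vOmul (h i.succ) (hT1 _ (Fintype.mem_piFinset.1 ha i)).1
    have h3 := L.vmulO ((h i.castSucc).add h2).neg (hc i.succ).2.1
    convert h3 using 1
    rw [eA_castSucc, hyc]
    have := (hc i.succ).2.2
    field_simp; ring

theorem cond_iff (L : Loc O ϖ ℓ ψ) {k : GL (Fin n) F} {h' : GL (Fin (n + 1)) F}
    (e : (h' : Matrix (Fin (n + 1)) (Fin (n + 1)) F)
      = Matrix.reindex finSumFinEquiv finSumFinEquiv
      (Matrix.fromBlocks (k : Matrix (Fin n) (Fin n) F) 0 0 (1 : Matrix (Fin 1) (Fin 1) F))) :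
    (∀ i j : Fin n, j < i →
      ∃ d ∈ O, (k : Matrix (Fin n) (Fin n) F) i j = ϖ ^ ((i : ℕ) - (j : ℕ) + 1) * d) ↔
      Cond O ϖ h' := by
  obtain ⟨b1, b2, b3, b4, -⟩ := block_entries e
  constructor
  · intro h i j
    refine Fin.lastCases ?_ (fun i => ?_) i <;> refine Fin.lastCases ?_ (fun j => ?_) j
    · intro h; exact absurd h (lt_irrefl _)
    · intro _; rw [b3]; exact V_zero _
    · intro h; exact absurd h (not_lt.2 (Fin.castSucc_lt_last i).le)
    · intro hij
      have hij' : j < i := Fin.castSucc_lt_castSucc_iff.1 hij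
      have := L.v_nat.2 (h i j hij')
      rw [b1]
      convert this using 1
      have : (j : ℕ) < i := hij'
      simp only [Fin.val_castSucc]
      omega
  · intro h i j hij
    have := h i.castSucc j.castSucc (Fin.castSucc_lt_castSucc_iff.2 hij)
    rw [b1] at this
    apply L.v_nat.1
    convert this using 1
    have : (j : ℕ) < i := hij
    simp only [Fin.val_castSucc]
    omega

end final

/-- local Birch lemma: let `W_{n+1}` be a spherical Whittaker function on
`GL_{n+1}(F)` for `ψ`, and set
`W̃(h) = Σ_{η ∈ 𝒩_{n+1}} (1-ℓ)^{s(η)} W_{n+1}(ι(h)η)`.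
Then `W̃` is supported on `N_n(F)·GL_n(O)`, and for `k ∈ GL_n(O)`:
`W̃(k) = (-1)ⁿ ℓ^{n(n+1)(n+2)/6} W_{n+1}(1)` if `v(k_{ij}) > i-j` for all `i > j`, else `0`.
The coset space `𝒩_{n+1} = φ⁻¹N_{n+1}(O)φ/N_{n+1}(O)` is realized by a set `S` of coset
representatives. -/
theorem stmt_12 (O : Subring F) (ϖ : F) (ℓ : ℕ)
    (hϖO : ϖ ∈ O) (hϖ0 : ϖ ≠ 0)
    (hval : ∀ x : F, x ≠ 0 → ∃ (k : ℤ) (w : F), w ∈ O ∧ w⁻¹ ∈ O ∧ x = ϖ ^ k * w)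
    (hres : ∀ k : ℕ, ∃ T : Finset F, (↑T : Set F) ⊆ (O : Set F) ∧ T.card = ℓ ^ k ∧
      ∀ y ∈ O, ∃! r, r ∈ T ∧ ∃ d ∈ O, y - r = ϖ ^ k * d)
    (ψ : F → ℂ) (hψadd : ∀ x y : F, ψ (x + y) = ψ x * ψ y)
    (hψO : ∀ x ∈ O, ψ x = 1)
    (hψnt : ∃ y : F, ϖ * y ∈ O ∧ ψ y ≠ 1)
    (n : ℕ)
    (W : GL (Fin (n + 1)) F → ℂ)
    -- `W(ug) = ψ(u) W(g)` for upper-triangular unipotent `u`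
    (hWleft : ∀ u g : GL (Fin (n + 1)) F,
      ((∀ i j, j < i → (u : Matrix (Fin (n + 1)) (Fin (n + 1)) F) i j = 0) ∧
        (∀ i, (u : Matrix (Fin (n + 1)) (Fin (n + 1)) F) i i = 1)) →
      W (u * g)
        = ψ (∑ i : Fin n, (u : Matrix (Fin (n + 1)) (Fin (n + 1)) F) i.castSucc i.succ)
          * W g)
    -- `W` is right `GL_{n+1}(O)`-invariant (spherical)
    (hWright : ∀ g k : GL (Fin (n + 1)) F, InGLO O k → W (g * k) = W g)
    -- `S`: a set of representatives of `𝒩_{n+1}`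
    (S : Finset (GL (Fin (n + 1)) F))
    (hSmem : ∀ η ∈ S, InConjN O ϖ η)
    (hSrep : ∀ η : GL (Fin (n + 1)) F, InConjN O ϖ η →
      ∃! ρ, ρ ∈ S ∧ ∃ ν : GL (Fin (n + 1)) F, InNO O ν ∧ η = ρ * ν) :
    -- support of `W̃` on `N_n(F)·GL_n(O)`
    (∀ (h : GL (Fin n) F) (h' : GL (Fin (n + 1)) F),
      (h' : Matrix (Fin (n + 1)) (Fin (n + 1)) F)
        = Matrix.reindex finSumFinEquiv finSumFinEquiv
            (Matrix.fromBlocks (h : Matrix (Fin n) (Fin n) F) 0 0 1) →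
      (¬ ∃ u k : GL (Fin n) F,
        ((∀ i j, j < i → (u : Matrix (Fin n) (Fin n) F) i j = 0) ∧
          (∀ i, (u : Matrix (Fin n) (Fin n) F) i i = 1)) ∧
        InGLO O k ∧ h = u * k) →
      (∑ η ∈ S, (1 - (ℓ : ℂ)) ^ (sInt O η) * W (h' * η)) = 0) ∧
    -- value of `W̃` on `GL_n(O)`
    (∀ (k : GL (Fin n) F) (h' : GL (Fin (n + 1)) F),
      (h' : Matrix (Fin (n + 1)) (Fin (n + 1)) F)
        = Matrix.reindex finSumFinEquiv finSumFinEquiv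
            (Matrix.fromBlocks (k : Matrix (Fin n) (Fin n) F) 0 0 1) →
      InGLO O k →
      ((∀ i j : Fin n, j < i →
          ∃ d ∈ O, (k : Matrix (Fin n) (Fin n) F) i j = ϖ ^ ((i : ℕ) - (j : ℕ) + 1) * d) →
        (∑ η ∈ S, (1 - (ℓ : ℂ)) ^ (sInt O η) * W (h' * η))
          = (-1) ^ n * (ℓ : ℂ) ^ (n * (n + 1) * (n + 2) / 6) * W 1) ∧
      ((¬ ∀ i j : Fin n, j < i →
          ∃ d ∈ O, (k : Matrix (Fin n) (Fin n) F) i j = ϖ ^ ((i : ℕ) - (j : ℕ) + 1) * d) →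
        (∑ η ∈ S, (1 - (ℓ : ℂ)) ^ (sInt O η) * W (h' * η)) = 0)) := by
  have L : Loc O ϖ ℓ ψ := ⟨hϖO, hϖ0, hval, hres, hψadd, hψO, hψnt⟩
  have H : Wh O ϖ ℓ ψ n W S := ⟨L, hWleft, hWright, hSmem, hSrep⟩
  obtain ⟨T, hT1, hT2, hT3⟩ := exists_units L
  have hTU : ∀ a ∈ Fintype.piFinset (fun _ : Fin n => T), UnitA O a :=
    fun a ha i => hT1 _ (Fintype.mem_piFinset.1 ha i)
  refine ⟨?_, ?_⟩
  · intro h h' e hno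
    rw [Wtilde_expand H hT3, Finset.sum_eq_zero, mul_zero]
    intro a ha
    by_contra hf
    exact hno (support_part H (hTU a ha) e hf)
  · intro k h' e hk
    have hO := block_GLO hk e
    rw [cond_iff L e, Wtilde_expand H hT3]
    refine ⟨fun hC => ?_, fun hC => ?_⟩
    · obtain ⟨-, -, -, b4, -⟩ := block_entries e
      obtain ⟨a0, ha0, h1, h2⟩ := exists_a L hT1 hT2
        (fun i => (h' : Matrix (Fin (n + 1)) (Fin (n + 1)) F) i i) (by
          intro i
          have := L.unit_of (hO.1 i i) (diag_units L hO (fun r c hcr => L.vmono (hC r c hcr) (by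
            have : (c : ℕ) < r := hcr
            omega)) i)
          exact ⟨hO.1 i i, this.2, this.1⟩) b4
      rw [Finset.sum_eq_single a0]
      · rw [fA_value H (hTU a0 ha0) hO hC h1, card_S L hSmem hSrep]
        push_cast
        ring
      · intro a ha hne
        by_contra hf
        exact hne (h2 a ha (fA_ne H (hTU a ha) hk e hf).2)
      · intro h; exact absurd ha0 h
    · rw [Finset.sum_eq_zero, mul_zero]
      intro a ha
      by_contra hf
      exact hC (fA_ne H (hTU a ha) hk e hf).1

end Stmt12
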